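/- arXiv:1104.5035 — 3 statements merged into one kernel-verified Lean document; each statement's English description precedes it below -/
import Mathlib

section
/- Let A be a Noetherian ring, M a finitely generated A-module, and I an ideal with IM ≠ M. Then depth_I(M) ≥ n if and only if H^p_I(M) = 0 for all p < n. -/
open CategoryTheory

universe u

/-!
Both sides say that `Ext^i(N, M) = 0` for all `i < n` and all finite `N` supported in `V(I)`. For
the depth this is Rees' theorem. For local cohomology one argues by induction on `n`: once these
groups vanish below `n`, the functor `Ext^n(-, M)` turns surjections of such modules into
injections, so the transition maps of the colimit `H^n_I(M) = colim_t Ext^n(A ⧸ I ^ t, M)` are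
injective. Hence `H^n_I(M) = 0` forces `Ext^n(A ⧸ I, M) = 0`, and a dévissage along a filtration
with factors `A ⧸ p`, where `I ≤ p`, extends the vanishing to all finite modules supported in
`V(I)`.

`localCohomology` is built from the derived functors `Ext R C n` while long exact sequences are
available for `Abelian.Ext`, so the two are first identified naturally in the first variable.
-/

section ExtComparison

open Opposite Limits

variable {R : Type*} [Ring R] {C : Type*} [Category* C] [Abelian C] [Linear R C]

section

variable [HasExt C] {X Y : C} (P : ProjectiveResolution X) {n m : ℕ}

open CochainComplex.HomComplex in
lemma extMk_eq_zero_iff_exists (f : P.complex.X n ⟶ Y) (hm : n + 1 = m)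
    (hf : P.complex.d m n ≫ f = 0) :
    P.extMk f m hm hf = 0 ↔
      ∃ g : P.complex.X ((ComplexShape.down ℕ).next n) ⟶ Y,
        P.complex.d n ((ComplexShape.down ℕ).next n) ≫ g = f := by
  obtain _ | n := n
  · have hd : P.cochainComplex.d 0 1 = 0 :=
      (CochainComplex.isZero_of_isStrictlyLE _ 0 1).eq_of_tgt _ _
    rw [← P.extEquivCohomologyClass.apply_eq_iff_eq, P.extEquivCohomologyClass_extMk,
      P.extEquivCohomologyClass_zero, CohomologyClass.mk_eq_zero_iff,
      Cocycle.toSingleMk_mem_coboundaries_iff _ _ _ _ _ 1 (by simp)]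
    simp [hd, eq_comm (a := (0 : P.complex.X 0 ⟶ Y)),
      eq_comm (b := (P.cochainComplexXIso 0 0).hom ≫ f)]
  · rw [P.extMk_eq_zero_iff f m hm hf n rfl, ChainComplex.next_nat_succ]

lemma smul_extMk (r : R) (f : P.complex.X n ⟶ Y) (hm : n + 1 = m)
    (hf : P.complex.d m n ≫ f = 0) :
    r • P.extMk f m hm hf = P.extMk (r • f) m hm (by rw [Linear.comp_smul, hf, smul_zero]) := by
  rw [Abelian.Ext.smul_eq_comp_mk₀, P.extMk_comp_mk₀]
  simp only [Linear.comp_smul, Category.comp_id]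

variable (R Y n) in
/-- The map sending a cocycle of `Hom(P, Y)` to its class in `Ext^n(X, Y)`, where `P` is a
projective resolution of `X`. -/
@[simps]
noncomputable def cocycleToExt :
    LinearMap.ker ((P.complex.linearYonedaObj R Y).sc n).g.hom →ₗ[R] Abelian.Ext X Y n where
  toFun g := P.extMk g.1 _ (by simp) g.2
  map_add' _ _ := (P.add_extMk ..).symm
  map_smul' _ _ := (smul_extMk ..).symm

lemma cocycleToExt_surjective : Function.Surjective (cocycleToExt R Y P n) := fun e ↦ by
  obtain ⟨g, hg, rfl⟩ := P.extMk_surjective e ((ComplexShape.up ℕ).next n) (by simp)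
  exact ⟨⟨g, hg⟩, rfl⟩

lemma ker_cocycleToExt : LinearMap.ker (cocycleToExt R Y P n) =
    LinearMap.range ((P.complex.linearYonedaObj R Y).sc n).moduleCatToCycles := by
  ext g
  refine (extMk_eq_zero_iff_exists P g.1 (by simp) g.2).trans ?_
  simp only [LinearMap.mem_range, Subtype.ext_iff]
  rfl

variable (R Y n) in
/-- The computation of `Ext^n(X, Y)` as the cohomology of `Hom(P, Y)`, for a projective resolution
`P` of `X`. -/
noncomputable def homologyLinearYonedaObjEquivExt :
    (P.complex.linearYonedaObj R Y).homology n ≃ₗ[R] Abelian.Ext X Y n :=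
  ((P.complex.linearYonedaObj R Y).sc n).moduleCatHomologyIso.toLinearEquiv ≪≫ₗ
    Submodule.quotEquivOfEq _ _ (ker_cocycleToExt P).symm ≪≫ₗ
    (cocycleToExt R Y P n).quotKerEquivOfSurjective (cocycleToExt_surjective P)

lemma homologyLinearYonedaObjEquivExt_homologyπ
    (z : (P.complex.linearYonedaObj R Y).cycles n) :
    homologyLinearYonedaObjEquivExt R Y P n ((P.complex.linearYonedaObj R Y).homologyπ n z) =
      P.extMk ((P.complex.linearYonedaObj R Y).iCycles n z : P.complex.X n ⟶ Y)
        ((ComplexShape.up ℕ).next n) (by simp)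
        (ConcreteCategory.congr_hom ((P.complex.linearYonedaObj R Y).iCycles_d n _) z) := by
  let S := (P.complex.linearYonedaObj R Y).sc n
  have hπ : S.moduleCatHomologyIso.hom (S.homologyπ z) =
      Submodule.Quotient.mk (S.moduleCatCyclesIso.hom z) :=
    ConcreteCategory.congr_hom S.π_moduleCatCyclesIso_hom z
  have : (S.moduleCatCyclesIso.hom z).1 = S.iCycles z :=
    ConcreteCategory.congr_hom S.moduleCatCyclesIso_hom_i z
  trans cocycleToExt R Y P n (S.moduleCatCyclesIso.hom z)
  · exact congr(((cocycleToExt R Y P n).quotKerEquivOfSurjective (cocycleToExt_surjective P))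
      (Submodule.quotEquivOfEq _ _ (ker_cocycleToExt P).symm $hπ))
  · exact (cocycleToExt_apply ..).trans (by congr 1)

end

/-- Precomposition with a chain map, as a map between the cochain complexes `Hom(-, Y)`. -/
noncomputable def linearYonedaMap {K L : ChainComplex C ℕ} (φ : K ⟶ L) (Y : C) :
    L.linearYonedaObj R Y ⟶ K.linearYonedaObj R Y :=
  (HomologicalComplex.unopFunctor _ _).map
    ((((linearYoneda R C).obj Y).rightOp.mapHomologicalComplex _).map φ).op

lemma homologyLinearYonedaObjEquivExt_homologyMap [HasExt C] {X X' : C}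
    {P : ProjectiveResolution X} {P' : ProjectiveResolution X'} {f : X' ⟶ X} (φ : P'.Hom P f)
    (n : ℕ) (Y : C) (x : (P.complex.linearYonedaObj R Y).homology n) :
    homologyLinearYonedaObjEquivExt R Y P' n
        (HomologicalComplex.homologyMap (linearYonedaMap φ.hom Y) n x) =
      (Abelian.Ext.mk₀ f).comp (homologyLinearYonedaObjEquivExt R Y P n x) (zero_add n) := by
  obtain ⟨z, rfl⟩ := (ModuleCat.epi_iff_surjective
    ((P.complex.linearYonedaObj R Y).homologyπ n)).mp inferInstance x
  have hπ := ConcreteCategory.congr_hom (HomologicalComplex.homologyπ_naturality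
    (linearYonedaMap (R := R) φ.hom Y) n) z
  have hi := ConcreteCategory.congr_hom (HomologicalComplex.cyclesMap_i
    (linearYonedaMap (R := R) φ.hom Y) n) z
  rw [homologyLinearYonedaObjEquivExt_homologyπ]
  refine (congrArg _ hπ).trans ((homologyLinearYonedaObjEquivExt_homologyπ P' _).trans
    (Eq.trans ?_ (P.mk₀_comp_extMk _ _ _ _ φ).symm))
  congr 1

lemma homologyUnop_inv_naturality {V : Type*} [Category* V] [HasZeroMorphisms V]
    [CategoryWithHomology V] {ι : Type*} {c : ComplexShape ι} {K L : HomologicalComplex Vᵒᵖ c}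
    (ψ : K ⟶ L) (i : ι) :
    (HomologicalComplex.homologyMap ψ i).unop ≫ (K.homologyUnop i).inv =
      (L.homologyUnop i).inv ≫ HomologicalComplex.homologyMap
        ((HomologicalComplex.unopFunctor _ _).map ψ.op) i :=
  (congrArg Quiver.Hom.unop (ShortComplex.homologyOpIso_inv_naturality
    ((HomologicalComplex.shortComplexFunctor V c.symm i).map
      ((HomologicalComplex.unopFunctor _ _).map ψ.op)))).symm

variable [EnoughProjectives C]

lemma isoExt_hom_naturality {X X' : C} {P : ProjectiveResolution X} {P' : ProjectiveResolution X'}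
    {f : X' ⟶ X} (φ : P'.Hom P f) (n : ℕ) (Y : C) :
    ((Ext R C n).map f.op).app Y ≫ (P'.isoExt n Y).hom =
      (P.isoExt n Y).hom ≫ HomologicalComplex.homologyMap (linearYonedaMap φ.hom Y) n := by
  have hφ : φ.hom.f 0 ≫ P.π.f 0 = P'.π.f 0 ≫ f := by
    have := φ.hom_f_zero_comp_π_f_zero
    rwa [ChainComplex.single₀_map_f_zero] at this
  have h := CommSq.mk (P'.isoLeftDerivedObj_inv_naturality f P φ.hom hφ
    ((linearYoneda R C).obj Y).rightOp n)
  exact (h.unop.horiz_comp ⟨(homologyUnop_inv_naturality _ n).symm⟩).w.symm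

variable [HasExt C]

variable (R) in
/-- The comparison between the derived functor `Ext` and the `Ext`-groups of the derived
category. -/
noncomputable def extLinearEquiv (X Y : C) (n : ℕ) :
    ((Ext R C n).obj (op X)).obj Y ≃ₗ[R] Abelian.Ext X Y n :=
  ((ProjectiveResolution.of X).isoExt n Y).toLinearEquiv ≪≫ₗ
    homologyLinearYonedaObjEquivExt R Y (.of X) n

lemma extLinearEquiv_map_app {X X' : C} (f : X' ⟶ X) (Y : C) (n : ℕ)
    (x : ((Ext R C n).obj (op X)).obj Y) :
    extLinearEquiv R X' Y n (((Ext R C n).map f.op).app Y x) =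
      (Abelian.Ext.mk₀ f).comp (extLinearEquiv R X Y n x) (zero_add n) := by
  let φ : (ProjectiveResolution.of X').Hom (ProjectiveResolution.of X) f :=
    ⟨ProjectiveResolution.lift f _ _,
      (ProjectiveResolution.lift_commutes_zero f _ _).trans (by simp)⟩
  exact (congrArg (homologyLinearYonedaObjEquivExt R Y _ n)
      (ConcreteCategory.congr_hom (isoExt_hom_naturality φ n Y) x)).trans
    (homologyLinearYonedaObjEquivExt_homologyMap φ n Y _)

variable (R) in
lemma isZero_ext_iff {X Y : C} {n : ℕ} :
    IsZero (((Ext R C n).obj (op X)).obj Y) ↔ Subsingleton (Abelian.Ext X Y n) :=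
  ModuleCat.isZero_iff_subsingleton.trans (extLinearEquiv R X Y n).toEquiv.subsingleton_congr

lemma mono_ext_map_app_iff {X X' : C} (f : X' ⟶ X) (Y : C) (n : ℕ) :
    Mono (((Ext R C n).map f.op).app Y) ↔
      Function.Injective ((Abelian.Ext.mk₀ f).precomp Y (zero_add n)) := by
  rw [ModuleCat.mono_iff_injective, ← (extLinearEquiv R X' Y n).toEquiv.comp_injective,
    ← (extLinearEquiv R X Y n).toEquiv.injective_comp]
  exact iff_of_eq (congrArg _ (funext (extLinearEquiv_map_app f Y n)))

end ExtComparison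

section ShortExact

variable {C : Type*} [Category* C] [Abelian C] [HasExt C]

lemma injective_precomp_mk₀_of_shortExact {S : ShortComplex C} (hS : S.ShortExact) {Y : C} {n : ℕ}
    (h : ∀ i < n, Subsingleton (Abelian.Ext S.X₁ Y i)) :
    Function.Injective ((Abelian.Ext.mk₀ S.g).precomp Y (zero_add n)) := by
  obtain _ | n := n
  · have := hS.epi_g
    exact Abelian.Ext.precomp_mk₀_injective_of_epi Y S.g
  · rw [injective_iff_map_eq_zero]
    intro x hx
    obtain ⟨y, rfl⟩ := Abelian.Ext.contravariant_sequence_exact₃ hS Y x hx (add_comm 1 n)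
    have := h n n.lt_succ_self
    rw [Subsingleton.elim y 0, Abelian.Ext.comp_zero]

lemma subsingleton_ext_of_shortExact {S : ShortComplex C} (hS : S.ShortExact) {Y : C} {n : ℕ}
    (h₁ : Subsingleton (Abelian.Ext S.X₁ Y n)) (h₃ : Subsingleton (Abelian.Ext S.X₃ Y n)) :
    Subsingleton (Abelian.Ext S.X₂ Y n) := by
  refine subsingleton_of_forall_eq 0 fun x ↦ ?_
  obtain ⟨y, rfl⟩ := Abelian.Ext.contravariant_sequence_exact₂ hS Y x (Subsingleton.elim _ _)
  rw [Subsingleton.elim y 0, Abelian.Ext.comp_zero]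

end ShortExact

section LocalCohomology

open Opposite Limits

variable {A : Type u} [CommRing A] {I : Ideal A} {M : ModuleCat.{u} A} {n : ℕ}

variable (I M n) in
/-- The groups `Ext^i(N, M)` with `i < n` vanish for every finite module `N` supported in `V(I)`.
When `A` is Noetherian and `M` is finite with `IM ≠ M`, this says that `depth_I(M) ≥ n`. -/
def ExtVanishesBelow : Prop :=
  ∀ N : ModuleCat.{u} A, Module.Finite A N → Module.support A N ⊆ PrimeSpectrum.zeroLocus I →
    ∀ i < n, Subsingleton (Abelian.Ext N M i)

lemma support_quotient_ideal (J : Ideal A) :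
    Module.support A (A ⧸ J) = PrimeSpectrum.zeroLocus J := by
  rw [Module.support_eq_zeroLocus, Ideal.annihilator_quotient]

lemma support_quotient_pow_subset (I : Ideal A) (t : ℕ) :
    Module.support A (A ⧸ I ^ t) ⊆ PrimeSpectrum.zeroLocus I :=
  (support_quotient_ideal _).trans_subset fun _ ↦ Ideal.IsPrime.le_of_pow_le

namespace ExtVanishesBelow

variable [IsNoetherianRing A]

lemma injective_precomp_mk₀ (h : ExtVanishesBelow I M n) {N N' : ModuleCat.{u} A}
    [Module.Finite A N] (hN : Module.support A N ⊆ PrimeSpectrum.zeroLocus I)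
    {f : N ⟶ N'} (hf : Function.Surjective f) :
    Function.Injective ((Abelian.Ext.mk₀ f).precomp M (zero_add n)) :=
  injective_precomp_mk₀_of_shortExact (LinearMap.shortExact_shortComplexKer hf)
    (h _ (inferInstanceAs (Module.Finite A (LinearMap.ker f.hom)))
      ((Module.support_subset_of_injective (LinearMap.ker f.hom).subtype
        Subtype.val_injective).trans hN))

lemma succ (h : ExtVanishesBelow I M n)
    (hn : Subsingleton (Abelian.Ext (ModuleCat.of A (A ⧸ I)) M n)) :
    ExtVanishesBelow I M (n + 1) := by
  intro N hfin hN i hi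
  obtain hi | rfl := Nat.lt_succ_iff_lt_or_eq.mp hi
  · exact h N hfin hN i hi
  have ofSurjective {L : Type u} [AddCommGroup L] [Module A L] (f : (A ⧸ I) →ₗ[A] L)
      (hf : Function.Surjective f) : Subsingleton (Abelian.Ext (ModuleCat.of A L) M i) :=
    (h.injective_precomp_mk₀ (N := .of A (A ⧸ I)) (f := ModuleCat.ofHom f)
      (support_quotient_ideal I).subset hf).subsingleton
  suffices ∀ (L : Type u) [AddCommGroup L] [Module A L], Module.Finite A L →
      Module.support A L ⊆ PrimeSpectrum.zeroLocus I →
        Subsingleton (Abelian.Ext (ModuleCat.of A L) M i) from this N hfin hN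
  intro L _ _ hL
  induction hL using IsNoetherianRing.induction_on_isQuotientEquivQuotientPrime A with
  | subsingleton L => exact fun _ ↦ ofSurjective 0 (Function.surjective_to_subsingleton _)
  | quotient L p e =>
    intro hL
    rw [e.support_eq, support_quotient_ideal] at hL
    have hp : I ≤ p.asIdeal := hL (le_refl p.asIdeal)
    exact ofSurjective (e.symm.toLinearMap ∘ₗ Submodule.factor hp)
      (e.symm.surjective.comp (Submodule.factor_surjective hp))
  | exact L₁ L₂ L₃ f g hf hg hfg ih₁ ih₃ =>
    intro hL
    rw [Module.support_of_exact hfg hf hg, Set.union_subset_iff] at hL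
    let S := ModuleCat.shortComplexOfCompEqZero f g hfg.linearMap_comp_eq_zero
    exact subsingleton_ext_of_shortExact (ModuleCat.shortComplex_shortExact S hfg hf hg)
      (ih₁ hL.1) (ih₃ hL.2)

end ExtVanishesBelow

open localCohomology in
variable (I M) in
/-- The presentation of `H^p_I(M)` as the colimit of the modules `Ext^p(A ⧸ I ^ t, M)`. -/
noncomputable def isColimitLocalCohomologyObj (p : ℕ) :
    IsColimit (((evaluation _ _).obj M).mapCocone
      (colimit.cocone (diagram (idealPowersDiagram I) p))) :=
  isColimitOfPreserves _ (colimit.isColimit _)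

lemma isZero_localCohomology_obj {p : ℕ}
    (h : ∀ t : ℕ, Subsingleton (Abelian.Ext (ModuleCat.of A (A ⧸ I ^ t)) M p)) :
    IsZero ((localCohomology I p).obj M) :=
  (isColimitLocalCohomologyObj I M p).isZero_pt
    (Functor.isZero _ fun t ↦ (isZero_ext_iff A).mpr (h t.unop.unop))

variable [IsNoetherianRing A]

lemma ExtVanishesBelow.mono_diagram_map (h : ExtVanishesBelow I M n) {t t' : ℕᵒᵖᵒᵖ} (φ : t ⟶ t') :
    Mono ((localCohomology.diagram (localCohomology.idealPowersDiagram I) n ⋙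
      (evaluation _ _).obj M).map φ) := by
  have : Module.Finite A ((localCohomology.ringModIdeals
      (localCohomology.idealPowersDiagram I)).obj t'.unop) :=
    inferInstanceAs (Module.Finite A (A ⧸ I ^ t'.unop.unop))
  exact (mono_ext_map_app_iff ..).mpr (h.injective_precomp_mk₀ (support_quotient_pow_subset I _)
    (Submodule.factor_surjective
      ((localCohomology.idealPowersDiagram I).map φ.unop).down.down))

lemma ExtVanishesBelow.subsingleton_ext_quotient_pow (h : ExtVanishesBelow I M n)
    (hn : IsZero ((localCohomology I n).obj M)) (t : ℕ) :
    Subsingleton (Abelian.Ext (ModuleCat.of A (A ⧸ I ^ t)) M n) := by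
  have : AB5OfSize.{0, 0} (ModuleCat.{u} A) := AB5OfSize_of_univLE.{0, 0, u, u} _
  have (t t' : ℕᵒᵖᵒᵖ) (φ : t ⟶ t') := h.mono_diagram_map φ
  have := (isColimitLocalCohomologyObj I M n).mono_ι_app_of_isFiltered (op (op t))
  exact (isZero_ext_iff A).mp (@IsZero.of_mono _ _ _ _ _ _ this hn)

theorem extVanishesBelow_iff_isZero_localCohomology :
    ExtVanishesBelow I M n ↔ ∀ p < n, IsZero ((localCohomology I p).obj M) := by
  refine ⟨fun h p hp ↦ isZero_localCohomology_obj fun t ↦ h _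
    (inferInstanceAs (Module.Finite A (A ⧸ I ^ t))) (support_quotient_pow_subset I t) p hp,
    fun h ↦ ?_⟩
  induction n with
  | zero => exact fun _ _ _ _ hi ↦ absurd hi (Nat.not_lt_zero _)
  | succ n ih =>
    have hn := ih fun p hp ↦ h p (hp.trans n.lt_succ_self)
    have hExt := hn.subsingleton_ext_quotient_pow (h n n.lt_succ_self) 1
    rw [pow_one] at hExt
    exact hn.succ hExt

theorem exists_isRegular_iff_extVanishesBelow [Module.Finite A M]
    (hIM : I • (⊤ : Submodule A M) < ⊤) :
    (∃ rs : List A, rs.length = n ∧ (∀ a ∈ rs, a ∈ I) ∧ RingTheory.Sequence.IsRegular M rs) ↔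
      ExtVanishesBelow I M n where
  mp := fun ⟨rs, hlen, hmem, hreg⟩ N _ hN ↦
    hlen ▸ ModuleCat.subsingleton_ext_of_exists_isRegular I N hN M hIM rs hmem hreg
  mpr h := ModuleCat.exists_isRegular_of_exists_subsingleton_ext I n M hIM (.of A (A ⧸ I))
    (support_quotient_ideal I)
    (h _ (inferInstanceAs (Module.Finite A (A ⧸ I))) (support_quotient_ideal I).subset)

end LocalCohomology

/-- Let `A` be a Noetherian ring, `M` a finitely generated `A`-module, and `I` an ideal
with `IM ≠ M`.  Then `depth_I(M) ≥ n` (i.e. there exists an `M`-regular sequence of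
length `n` consisting of elements of `I`) if and only if the local cohomology modules
`H^p_I(M)` vanish for all `p < n`. -/
theorem depth_ge_iff_localCohomology_isZero (A : Type u) [CommRing A] [IsNoetherianRing A]
    (I : Ideal A) (M : Type u) [AddCommGroup M] [Module A M] [Module.Finite A M]
    (hIM : I • (⊤ : Submodule A M) ≠ ⊤) (n : ℕ) :
    (∃ rs : List A, rs.length = n ∧ (∀ a ∈ rs, a ∈ I) ∧
      RingTheory.Sequence.IsRegular M rs) ↔
      ∀ p : ℕ, p < n →
        Limits.IsZero ((localCohomology I p).obj (ModuleCat.of A M)) :=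
  (exists_isRegular_iff_extVanishesBelow (M := .of A M) hIM.lt_top).trans
    extVanishesBelow_iff_isZero_localCohomology
end

section
/- Let A be a regular local Noetherian ring of dimension d with maximal ideal m. Then for every finitely generated A-module M and every p, there is an isomorphism H^p_m(M) ≅ Hom_A(Ext^{d-p}_A(M, A), H^d_m(A)). -/
open CategoryTheory Opposite IsLocalRing

universe u

/-!
Composition of extension classes gives a pairing `H^p_m(M) × Ext^q(M, A) → H^d_m(A)`, and the
duality isomorphism is the induced map `H^p_m(M) → Hom(Ext^q(M, A), H^d_m(A))`. For `M` free and
`q = 0` it is bijective by inspection; for general `M` one takes a short exact sequence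
`0 → K → A^n → M → 0` and moves along the two long exact sequences by induction on `q`, using
`H^i_m(A) = 0` for `i < d`, `H^{d+1}_m = 0` and, when `q = 0`, the injectivity of `H^d_m(A)`.

The vanishing holds because `m` is generated by a regular sequence of length `d`. Injectivity
follows too: `Ext^d(-, A)` is exact on finite modules killed by a power of `m`, as the adjacent
`Ext` groups vanish, and on such modules `Ext^d(N, A) → Hom(N, H^d_m(A))` is bijective. By
Artin-Rees, a map from an ideal to the `m`-torsion module `H^d_m(A)` factors through a submodule of
some `A ⧸ m ^ k`, and so it extends to `A ⧸ m ^ k`, hence to `A`.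
-/

/-! ### Comparison of the two definitions of `Ext` -/

section ExtComparison

open Abelian CochainComplex HomComplex

universe v

variable {C : Type*} [Category.{v} C] [Abelian C] [HasExt.{v} C] {X X' : C}

lemma extMk_zero_eq_zero_iff (P : ProjectiveResolution X) {Y : C} (f : P.complex.X 0 ⟶ Y) (m : ℕ)
    (hm : 0 + 1 = m) (hf : P.complex.d m 0 ≫ f = 0) : P.extMk f m hm hf = 0 ↔ f = 0 := by
  refine ⟨fun h ↦ ?_, fun h ↦ by subst h; simp⟩
  simp only [← P.extEquivCohomologyClass.apply_eq_iff_eq,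
    ProjectiveResolution.extEquivCohomologyClass_extMk,
    ProjectiveResolution.extEquivCohomologyClass_zero, CohomologyClass.mk_eq_zero_iff] at h
  rw [Cocycle.toSingleMk_mem_coboundaries_iff _ _ _ _ _ 1 (by lia)] at h
  obtain ⟨g, hg⟩ := h
  have hzero : Limits.IsZero (P.cochainComplex.X 1) :=
    P.cochainComplex.isZero_of_isStrictlyLE 0 1
  rw [hzero.eq_of_src g 0, Limits.comp_zero] at hg
  rw [← cancel_epi (P.cochainComplexXIso _ 0 rfl).hom]
  simpa using hg.symm

lemma extMk_eq_zero_iff_exists_d_comp_eq (P : ProjectiveResolution X) {Y : C} (n : ℕ)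
    (f : P.complex.X n ⟶ Y) (m : ℕ) (hm : n + 1 = m) (hf : P.complex.d m n ≫ f = 0) :
    P.extMk f m hm hf = 0 ↔
      ∃ g : P.complex.X ((ComplexShape.down ℕ).next n) ⟶ Y, P.complex.d n _ ≫ g = f := by
  cases n with
  | zero =>
    rw [extMk_zero_eq_zero_iff]
    simp [eq_comm]
  | succ n =>
    rw [P.extMk_eq_zero_iff _ _ _ _ ((ComplexShape.down ℕ).next (n + 1)) (by simp)]

variable {A : Type*} [CommRing A] [Linear A C]

lemma smul_extMk_s6 (P : ProjectiveResolution X) {Y : C} {n : ℕ} (a : A) (f : P.complex.X n ⟶ Y)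
    (m : ℕ) (hm : n + 1 = m) (hf : P.complex.d m n ≫ f = 0) :
    a • P.extMk f m hm hf = P.extMk (a • f) m hm (by simp [hf]) := by
  rw [Ext.smul_eq_comp_mk₀, ProjectiveResolution.extMk_comp_mk₀]
  simp

/-- The functor `Hom(-, Y)`, made covariant by passing to the opposite of its target, whose left
derived functors define `CategoryTheory.Ext`. -/
noncomputable abbrev homOp (A : Type*) [CommRing A] [Linear A C] (Y : C) :
    C ⥤ (ModuleCat.{v} A)ᵒᵖ :=
  ((linearYoneda A C).obj Y).rightOp

/-- The part `Hom(P_{n-1}, Y) ⟶ Hom(P_n, Y) ⟶ Hom(P_{n+1}, Y)` of the complex of homomorphisms from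
a chain complex `P` to `Y`, with `Hom(P_{-1}, Y)` interpreted as zero. -/
noncomputable abbrev homShortComplex (A : Type*) [CommRing A] [Linear A C]
    (P : ChainComplex C ℕ) (Y : C) (n : ℕ) : ShortComplex (ModuleCat.{v} A) :=
  ((((homOp A Y).mapHomologicalComplex _).obj P).sc n).unop

/-- The functoriality of `homShortComplex` in the chain complex. -/
noncomputable abbrev homShortComplexMap (A : Type*) [CommRing A] [Linear A C]
    {P P' : ChainComplex C ℕ} (φ : P' ⟶ P) (Y : C) (n : ℕ) :
    homShortComplex A P Y n ⟶ homShortComplex A P' Y n :=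
  ShortComplex.unopMap ((HomologicalComplex.shortComplexFunctor _ _ n).map
    (((homOp A Y).mapHomologicalComplex _).map φ))

variable (A) (P : ProjectiveResolution X) (P' : ProjectiveResolution X') (Y : C) (n : ℕ)

/-- The map sending a cocycle of `Hom(P, Y)` to its class in `Ext`. -/
noncomputable def cocyclesToExt :
    LinearMap.ker (homShortComplex A P.complex Y n).g.hom →ₗ[A] Abelian.Ext X Y n where
  toFun f := P.extMk f.1 _ (by simp) f.2
  map_add' _ _ := (P.add_extMk _ _ _ _ _ _).symm
  map_smul' a _ := (smul_extMk_s6 P a _ _ _ _).symm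

lemma cocyclesToExt_surjective : Function.Surjective (cocyclesToExt A P Y n) := fun x ↦ by
  obtain ⟨f, hf, rfl⟩ := P.extMk_surjective x ((ComplexShape.down ℕ).prev n) (by simp)
  exact ⟨⟨f, hf⟩, rfl⟩

lemma ker_cocyclesToExt : LinearMap.ker (cocyclesToExt A P Y n) =
    LinearMap.range (homShortComplex A P.complex Y n).moduleCatToCycles := by
  ext f
  exact (extMk_eq_zero_iff_exists_d_comp_eq P n f.1 _ (by simp) f.2).trans
    ⟨fun ⟨g, hg⟩ ↦ ⟨g, Subtype.ext hg⟩, fun ⟨g, hg⟩ ↦ ⟨g, congrArg Subtype.val hg⟩⟩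

variable {P P'} in
lemma cocyclesToExt_of_eq_comp {g : X' ⟶ X} (φ : ProjectiveResolution.Hom P' P g)
    (f : LinearMap.ker (homShortComplex A P.complex Y n).g.hom)
    (f' : LinearMap.ker (homShortComplex A P'.complex Y n).g.hom) (h : f'.1 = φ.hom.f n ≫ f.1) :
    cocyclesToExt A P' Y n f' =
      (Abelian.Ext.mk₀ g).comp (cocyclesToExt A P Y n f) (zero_add n) := by
  obtain ⟨f', hf'⟩ := f'
  obtain rfl : f' = φ.hom.f n ≫ f.1 := h
  exact (ProjectiveResolution.mk₀_comp_extMk f.1 _ (by simp) f.2 φ).symm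

/-- The group `Ext` as the homology of `Hom(P, Y)`. -/
noncomputable def extLeftHomologyData : (homShortComplex A P.complex Y n).LeftHomologyData :=
  (homShortComplex A P.complex Y n).moduleCatLeftHomologyData.copy (Iso.refl _)
    ((Submodule.quotEquivOfEq _ _ (ker_cocyclesToExt A P Y n).symm ≪≫ₗ
      (cocyclesToExt A P Y n).quotKerEquivOfSurjective
        (cocyclesToExt_surjective A P Y n)).toModuleIso.symm)

variable {P P'} in
lemma leftHomologyMapData_φH_eq_precomp {g : X' ⟶ X} (φ : ProjectiveResolution.Hom P' P g)
    (γ : ShortComplex.LeftHomologyMapData (homShortComplexMap A φ.hom Y n)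
      (extLeftHomologyData A P Y n) (extLeftHomologyData A P' Y n)) :
    γ.φH = ModuleCat.ofHom ((Abelian.Ext.mk₀ g).precompOfLinear A Y (zero_add n)) := by
  refine (cancel_epi (extLeftHomologyData A P Y n).π).1 (γ.commπ.trans ?_)
  refine ModuleCat.hom_ext (LinearMap.ext fun f ↦ ?_)
  exact cocyclesToExt_of_eq_comp A Y n φ f _ (ConcreteCategory.congr_hom γ.commi f)

variable [EnoughProjectives C]

/-- The left derived functors of `homOp A Y` computed by `Abelian.Ext`. -/
noncomputable def leftDerivedIsoExt :
    ((homOp A Y).leftDerived n).obj X ≅ op (ModuleCat.of A (Abelian.Ext X Y n)) :=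
  P.isoLeftDerivedObj _ n ≪≫ (extLeftHomologyData A P Y n).op.homologyIso

lemma leftDerivedIsoExt_hom_naturality (g : X' ⟶ X) :
    ((homOp A Y).leftDerived n).map g ≫ (leftDerivedIsoExt A P Y n).hom =
      (leftDerivedIsoExt A P' Y n).hom ≫
        (ModuleCat.ofHom ((Abelian.Ext.mk₀ g).precompOfLinear A Y (zero_add n))).op := by
  have hφ : (ProjectiveResolution.lift g P' P).f 0 ≫ P.π.f 0 = P'.π.f 0 ≫ g :=
    ProjectiveResolution.lift_commutes_zero g P' P
  let φ : ProjectiveResolution.Hom P' P g :=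
    ⟨ProjectiveResolution.lift g P' P, by simpa using! hφ⟩
  let γ : ShortComplex.LeftHomologyMapData (homShortComplexMap A φ.hom Y n)
    (extLeftHomologyData A P Y n) (extLeftHomologyData A P' Y n) := default
  rw [← leftHomologyMapData_φH_eq_precomp A Y n φ γ]
  refine (P'.isoLeftDerivedObj_hom_naturality_assoc g P φ.hom hφ _ n _).trans ?_
  exact (congrArg _ γ.op.homologyMap_comm).trans (Category.assoc _ _ _).symm

/-- The `Ext` of derived functors agrees with the `Ext` of the derived category. -/
noncomputable def extIso (X Y : C) (n : ℕ) :
    ((_root_.Ext A C n).obj (op X)).obj Y ≅ ModuleCat.of A (Abelian.Ext X Y n) :=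
  (leftDerivedIsoExt A (ProjectiveResolution.of X) Y n).unop.symm

lemma extIso_hom_naturality (g : X' ⟶ X) :
    ((_root_.Ext A C n).map g.op).app Y ≫ (extIso A X' Y n).hom =
      (extIso A X Y n).hom ≫
        ModuleCat.ofHom ((Abelian.Ext.mk₀ g).precompOfLinear A Y (zero_add n)) := by
  have h := congrArg Quiver.Hom.unop (leftDerivedIsoExt_hom_naturality A
    (ProjectiveResolution.of X) (ProjectiveResolution.of X') Y n g)
  exact (Iso.comp_inv_eq (leftDerivedIsoExt A (ProjectiveResolution.of X') Y n).unop).2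
    (((Iso.eq_inv_comp (leftDerivedIsoExt A (ProjectiveResolution.of X) Y n).unop).2 h).trans
      (Category.assoc _ _ _).symm)

end ExtComparison

/-! ### Local cohomology as a direct limit -/

section PowQuot

variable {A : Type u} [CommRing A] (I : Ideal A)

/-- The module `A ⧸ I ^ t`, as an object of the category of modules. -/
abbrev powQuot (t : ℕ) : ModuleCat.{u} A := ModuleCat.of A (A ⧸ I ^ t)

/-- The projection from `A ⧸ I ^ t` to `A ⧸ I ^ s` for `s ≤ t`. -/
noncomputable def powQuotMap {s t : ℕ} (h : s ≤ t) : powQuot I t ⟶ powQuot I s :=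
  ModuleCat.ofHom (Submodule.mapQ (I ^ t) (I ^ s) LinearMap.id (Ideal.pow_le_pow_right h))

end PowQuot

/-- The local cohomology module `H^p_I(M)`. -/
noncomputable abbrev LocCoh {A : Type u} [CommRing A] (I : Ideal A) (p : ℕ)
    (M : ModuleCat.{u} A) : Type u :=
  (localCohomology I p).obj M

namespace LocCoh

open Abelian

variable {A : Type u} [CommRing A] (I : Ideal A)

/-- The diagram of the modules `Ext^p(A ⧸ I ^ t, M)`, whose colimit is `H^p_I(M)`. -/
noncomputable abbrev diagram (p : ℕ) (M : ModuleCat.{u} A) : ℕᵒᵖᵒᵖ ⥤ ModuleCat.{u} A :=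
  localCohomology.diagram (localCohomology.idealPowersDiagram I) p ⋙ (evaluation _ _).obj M

/-- The cocone exhibiting `H^p_I(M)` as a colimit. -/
noncomputable abbrev cocone (p : ℕ) (M : ModuleCat.{u} A) : Limits.Cocone (diagram I p M) :=
  ((evaluation _ _).obj M).mapCocone (Limits.colimit.cocone _)

/-- The universal property of `H^p_I(M)`. -/
noncomputable def isColimitCocone (p : ℕ) (M : ModuleCat.{u} A) :
    Limits.IsColimit (cocone I p M) :=
  Limits.isColimitOfPreserves _ (Limits.colimit.isColimit _)

instance : Limits.PreservesFilteredColimitsOfSize.{0, 0} (forget (ModuleCat.{u} A)) :=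
  Limits.preservesFilteredColimitsOfSize_shrink.{0, u, 0, u} _

/-- The canonical map from `Ext^p(A ⧸ I ^ t, M)` to `H^p_I(M)`. -/
noncomputable def of (p : ℕ) (M : ModuleCat.{u} A) (t : ℕ) :
    Ext (powQuot I t) M p →ₗ[A] LocCoh I p M :=
  ((extIso A (powQuot I t) M p).inv ≫ (cocone I p M).ι.app (op (op t))).hom

lemma of_extIso_hom (p : ℕ) (M : ModuleCat.{u} A) (t : ℕ) (x : (diagram I p M).obj (op (op t))) :
    of I p M t ((extIso A (powQuot I t) M p).hom x) = (cocone I p M).ι.app (op (op t)) x :=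
  congrArg ((cocone I p M).ι.app (op (op t))) ((extIso A (powQuot I t) M p).hom_inv_id_apply x)

lemma extIso_hom_map (p : ℕ) (M : ModuleCat.{u} A) {s t : ℕ} (h : s ≤ t)
    (x : (diagram I p M).obj (op (op s))) :
    (extIso A (powQuot I t) M p).hom ((diagram I p M).map (homOfLE h).op.op x) =
      (Ext.mk₀ (powQuotMap I h)).comp ((extIso A (powQuot I s) M p).hom x) (zero_add p) :=
  ConcreteCategory.congr_hom (extIso_hom_naturality A M p (powQuotMap I h)) x

lemma exists_extIso_hom_eq {p : ℕ} {M : ModuleCat.{u} A} {t : ℕ} (x : Ext (powQuot I t) M p) :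
    ∃ y : (diagram I p M).obj (op (op t)), (extIso A (powQuot I t) M p).hom y = x :=
  ⟨_, (extIso A (powQuot I t) M p).inv_hom_id_apply x⟩

lemma of_comp (p : ℕ) (M : ModuleCat.{u} A) {s t : ℕ} (h : s ≤ t) (x : Ext (powQuot I s) M p) :
    of I p M t ((Ext.mk₀ (powQuotMap I h)).comp x (zero_add p)) = of I p M s x := by
  obtain ⟨y, rfl⟩ := exists_extIso_hom_eq I x
  rw [← extIso_hom_map, of_extIso_hom, of_extIso_hom]
  exact ConcreteCategory.congr_hom ((cocone I p M).w (homOfLE h).op.op) y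

variable {I}

lemma exists_of {p : ℕ} {M : ModuleCat.{u} A} (z : LocCoh I p M) : ∃ t x, of I p M t x = z := by
  obtain ⟨⟨⟨t⟩⟩, y, rfl⟩ := Limits.Concrete.isColimit_exists_rep _ (isColimitCocone I p M) z
  exact ⟨t, _, of_extIso_hom I p M t y⟩

lemma exists_of_eq_zero {p : ℕ} {M : ModuleCat.{u} A} {t : ℕ} {x : Ext (powQuot I t) M p}
    (h : of I p M t x = 0) :
    ∃ s, ∃ h : t ≤ s, (Ext.mk₀ (powQuotMap I h)).comp x (zero_add p) = 0 := by
  obtain ⟨y, rfl⟩ := exists_extIso_hom_eq I x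
  rw [of_extIso_hom] at h
  obtain ⟨⟨⟨s⟩⟩, f, g, hfg⟩ := (Limits.Concrete.isColimit_rep_eq_iff_exists _
    (isColimitCocone I p M) (j := op (op t)) y 0).1
      (h.trans (map_zero ((cocone I p M).ι.app _).hom).symm)
  refine ⟨s, f.unop.unop.le, ?_⟩
  rw [← extIso_hom_map]
  exact (congrArg _ (hfg.trans (map_zero ((diagram I p M).map g).hom))).trans
    (map_zero (extIso A (powQuot I s) M p).hom.hom)

lemma linearMap_ext {p : ℕ} {M : ModuleCat.{u} A} {N : Type*} [AddCommGroup N] [Module A N]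
    {f g : LocCoh I p M →ₗ[A] N} (h : ∀ t x, f (of I p M t x) = g (of I p M t x)) : f = g := by
  ext z
  obtain ⟨t, x, rfl⟩ := exists_of z
  exact h t x

/-- The linear map out of `H^p_I(M)` defined by a compatible family of linear maps on the modules
`Ext^p(A ⧸ I ^ t, M)`. -/
noncomputable def lift {p : ℕ} {M : ModuleCat.{u} A} {N : Type u} [AddCommGroup N] [Module A N]
    (φ : ∀ t, Ext (powQuot I t) M p →ₗ[A] N)
    (hφ : ∀ s t (h : s ≤ t) x, φ t ((Ext.mk₀ (powQuotMap I h)).comp x (zero_add p)) = φ s x) :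
    LocCoh I p M →ₗ[A] N :=
  ((isColimitCocone I p M).desc
    { pt := ModuleCat.of A N
      ι :=
        { app t := (extIso A (powQuot I t.unop.unop) M p).hom ≫ ModuleCat.ofHom (φ t.unop.unop)
          naturality _ _ f := ModuleCat.hom_ext <| LinearMap.ext fun x ↦
            (congrArg (φ _) (extIso_hom_map I p M f.unop.unop.le x)).trans
              (hφ _ _ f.unop.unop.le _) } }).hom

lemma lift_of {p : ℕ} {M : ModuleCat.{u} A} {N : Type u} [AddCommGroup N] [Module A N]
    (φ : ∀ t, Ext (powQuot I t) M p →ₗ[A] N)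
    (hφ : ∀ s t (h : s ≤ t) x, φ t ((Ext.mk₀ (powQuotMap I h)).comp x (zero_add p)) = φ s x)
    (t : ℕ) (x : Ext (powQuot I t) M p) : lift φ hφ (of I p M t x) = φ t x := by
  obtain ⟨y, rfl⟩ := exists_extIso_hom_eq I x
  rw [of_extIso_hom]
  exact ConcreteCategory.congr_hom ((isColimitCocone I p M).fac _ (op (op t))) y

lemma subsingleton {p : ℕ} {M : ModuleCat.{u} A} (h : ∀ t, Subsingleton (Ext (powQuot I t) M p)) :
    Subsingleton (LocCoh I p M) := by
  refine subsingleton_of_forall_eq 0 fun z ↦ ?_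
  obtain ⟨t, x, rfl⟩ := exists_of z
  rw [Subsingleton.elim x 0, map_zero]

variable (I) in
/-- The map `H^p_I(M) → H^r_I(N)` induced by an extension class of degree `r - p`. -/
noncomputable def postExt {M N : ModuleCat.{u} A} {p q r : ℕ} (h : p + q = r) (e : Ext M N q) :
    LocCoh I p M →ₗ[A] LocCoh I r N :=
  lift (fun t ↦ (of I r N t).comp (e.postcompOfLinear A (powQuot I t) h)) fun s t hst x ↦ by
    have hassoc : ((Ext.mk₀ (powQuotMap I hst)).comp x (zero_add p)).comp e h =
        (Ext.mk₀ (powQuotMap I hst)).comp (x.comp e h) (zero_add r) :=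
      Ext.comp_assoc _ _ _ _ _ (by lia)
    exact (congrArg (of I r N t) hassoc).trans (of_comp I r N hst (x.comp e h))

lemma postExt_of {M N : ModuleCat.{u} A} {p q r : ℕ} (h : p + q = r) (e : Ext M N q) (t : ℕ)
    (x : Ext (powQuot I t) M p) : postExt I h e (of I p M t x) = of I r N t (x.comp e h) :=
  lift_of _ _ t x

variable (I) in
/-- The map `postExt`, as a linear function of the extension class. -/
noncomputable def post {p q r : ℕ} (h : p + q = r) (M N : ModuleCat.{u} A) :
    Ext M N q →ₗ[A] LocCoh I p M →ₗ[A] LocCoh I r N where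
  toFun := postExt I h
  map_add' e e' := linearMap_ext fun t x ↦ by
    rw [LinearMap.add_apply, postExt_of, postExt_of, postExt_of, Ext.comp_add, map_add]
  map_smul' a e := linearMap_ext fun t x ↦ by
    rw [LinearMap.smul_apply, postExt_of, postExt_of, Ext.comp_smul, map_smul, RingHom.id_apply]

lemma post_of {p q r : ℕ} (h : p + q = r) {M N : ModuleCat.{u} A} (e : Ext M N q) (t : ℕ)
    (x : Ext (powQuot I t) M p) : post I h M N e (of I p M t x) = of I r N t (x.comp e h) :=
  postExt_of h e t x

lemma post_comp {p q r q' r' q'' : ℕ} (h : p + q = r) (h' : r + q' = r') (hq : q + q' = q'')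
    {M N P : ModuleCat.{u} A} (e : Ext M N q) (e' : Ext N P q') (z : LocCoh I p M) :
    post I (show p + q'' = r' by lia) M P (e.comp e' hq) z =
      post I h' N P e' (post I h M N e z) := by
  obtain ⟨t, x, rfl⟩ := exists_of z
  rw [post_of, post_of, post_of, Ext.comp_assoc _ _ _ h hq (by lia)]

variable (I) in
/-- The map `H^p_I(M) → H^p_I(N)` induced by a morphism `M ⟶ N`. -/
noncomputable abbrev map (p : ℕ) {M N : ModuleCat.{u} A} (f : M ⟶ N) :
    LocCoh I p M →ₗ[A] LocCoh I p N :=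
  post I (add_zero p) M N (Ext.mk₀ f)

lemma map_comp {p : ℕ} {M N P : ModuleCat.{u} A} (f : M ⟶ N) (g : N ⟶ P) (z : LocCoh I p M) :
    map I p (f ≫ g) z = map I p g (map I p f z) := by
  rw [← post_comp (add_zero p) (add_zero p) (add_zero 0), Ext.mk₀_comp_mk₀]

lemma map_id {p : ℕ} {M : ModuleCat.{u} A} (z : LocCoh I p M) : map I p (𝟙 M) z = z := by
  obtain ⟨t, x, rfl⟩ := exists_of z
  rw [post_of, Ext.comp_mk₀_id]

section ShortExact

variable {S : ShortComplex (ModuleCat.{u} A)} (hS : S.ShortExact)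
include hS

lemma exists_map_eq_of_post_extClass_eq_zero {p r : ℕ} (h : p + 1 = r) (z : LocCoh I p S.X₃)
    (hz : post I h S.X₃ S.X₁ hS.extClass z = 0) : ∃ y, map I p S.g y = z := by
  obtain ⟨t, x, rfl⟩ := exists_of z
  rw [post_of] at hz
  obtain ⟨s, hs, hx⟩ := exists_of_eq_zero hz
  obtain ⟨y, hy⟩ := Ext.covariant_sequence_exact₃ _ hS
    ((Ext.mk₀ (powQuotMap I hs)).comp x (zero_add p)) h
    (.trans (Ext.comp_assoc _ _ _ _ _ (by lia)) hx)
  exact ⟨of I p S.X₂ s y, by rw [post_of, hy, of_comp]⟩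

lemma exists_post_extClass_eq_of_map_eq_zero {p r : ℕ} (h : p + 1 = r) (z : LocCoh I r S.X₁)
    (hz : map I r S.f z = 0) : ∃ y, post I h S.X₃ S.X₁ hS.extClass y = z := by
  obtain ⟨t, x, rfl⟩ := exists_of z
  rw [post_of] at hz
  obtain ⟨s, hs, hx⟩ := exists_of_eq_zero hz
  obtain ⟨y, hy⟩ := Ext.covariant_sequence_exact₁ _ hS
    ((Ext.mk₀ (powQuotMap I hs)).comp x (zero_add r))
    (.trans (Ext.comp_assoc _ _ _ _ _ (by lia)) hx) h
  exact ⟨of I p S.X₃ s y, by rw [post_of, hy, of_comp]⟩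

end ShortExact

end LocCoh

/-! ### Regular local rings -/

section RegularLocalRing

open RingTheory.Sequence

lemma eq_bot_of_le_maximalIdeal_mul {A : Type*} [CommRing A] [IsNoetherianRing A] [IsLocalRing A]
    {I : Ideal A} (h : I ≤ maximalIdeal A * I) : I = ⊥ :=
  Submodule.eq_bot_of_le_smul_of_le_jacobson_bot (maximalIdeal A) I (IsNoetherian.noetherian _) h
    (maximalIdeal_le_jacobson _)

lemma maximalIdeal_notMem_minimalPrimes {A : Type*} [CommRing A] [IsLocalRing A]
    (h : ringKrullDim A ≠ 0) : maximalIdeal A ∉ minimalPrimes A := fun hm ↦ h <| by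
  rw [← maximalIdeal_height_eq_ringKrullDim, Ideal.height_eq_zero_iff.2 hm, WithBot.coe_zero]

lemma exists_mem_maximalIdeal_notMem_sq_notMem_minimalPrimes (A : Type*) [CommRing A]
    [IsNoetherianRing A] [IsLocalRing A] (h : ringKrullDim A ≠ 0) :
    ∃ x ∈ maximalIdeal A, x ∉ maximalIdeal A ^ 2 ∧ ∀ P ∈ minimalPrimes A, x ∉ P := by
  have not_le_minimalPrime : ∀ P ∈ minimalPrimes A, ¬ maximalIdeal A ≤ P := fun P hP hle ↦
    have hPprime := Ideal.IsMinimalPrime.isPrime hP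
    maximalIdeal_notMem_minimalPrimes h (le_antisymm hle (le_maximalIdeal hPprime.ne_top) ▸ hP)
  have hfin := minimalPrimes.finite_of_isNoetherianRing A
  by_contra! hx
  have hsub : (maximalIdeal A : Set A) ⊆
      ⋃ I ∈ (↑(insert (maximalIdeal A ^ 2) hfin.toFinset) : Set (Ideal A)), (I : Set A) := by
    intro x hxm
    by_cases hx2 : x ∈ maximalIdeal A ^ 2
    · exact Set.mem_biUnion (by simp) hx2
    · obtain ⟨P, hP, hxP⟩ := hx x hxm hx2
      exact Set.mem_biUnion (by simp [hP]) hxP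
  -- Prime avoidance tolerates one ideal which need not be prime, here the square.
  obtain ⟨I, hI, hle⟩ := (Ideal.subset_union_prime (f := fun I : Ideal A ↦ I)
    (maximalIdeal A ^ 2) (maximalIdeal A ^ 2) fun P hP hne _ ↦
      Ideal.IsMinimalPrime.isPrime (show P ∈ minimalPrimes A by simpa [hne] using hP)).1 hsub
  rcases Finset.mem_insert.1 hI with rfl | hI
  · have hbot : maximalIdeal A = ⊥ := eq_bot_of_le_maximalIdeal_mul (by rwa [← sq])
    obtain ⟨P, hP, -⟩ := Ideal.exists_minimalPrimes_le (bot_le : ⊥ ≤ maximalIdeal A)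
    exact not_le_minimalPrime P hP (hbot ▸ bot_le)
  · exact not_le_minimalPrime I (by simpa using hI) hle

lemma exists_span_insert_erase_eq {A : Type*} [CommRing A] [IsLocalRing A] [DecidableEq A]
    {s : Finset A} (hs : Ideal.span (s : Set A) = maximalIdeal A) {x : A}
    (hx : x ∈ maximalIdeal A) (hx2 : x ∉ maximalIdeal A ^ 2) :
    ∃ a ∈ s, Ideal.span (insert x (s.erase a : Set A)) = maximalIdeal A := by
  rw [← hs, Submodule.mem_span_finset] at hx
  obtain ⟨c, -, rfl⟩ := hx
  obtain ⟨a, ha, hc⟩ : ∃ a ∈ s, c a ∉ maximalIdeal A := by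
    by_contra! h
    refine hx2 (Ideal.sum_mem _ fun a ha ↦ ?_)
    rw [sq]
    exact Ideal.mul_mem_mul (h a ha) (hs ▸ Ideal.subset_span ha)
  have hunit : IsUnit (c a) := notMem_maximalIdeal.1 hc
  refine ⟨a, ha, le_antisymm ?_ ?_⟩
  · rw [← hs, Ideal.span_le, Set.insert_subset_iff]
    exact ⟨Ideal.sum_mem _ fun b hb ↦ Ideal.mul_mem_left _ _ (Ideal.subset_span hb),
      fun b hb ↦ Ideal.subset_span (Finset.mem_of_mem_erase hb)⟩
  · rw [← hs, Ideal.span_le]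
    intro b hb
    by_cases hba : b = a
    · subst hba
      have hsum : c b * b = ∑ i ∈ s, c i • i - ∑ i ∈ s.erase b, c i • i := by
        rw [← Finset.add_sum_erase s _ ha, add_sub_cancel_right, smul_eq_mul]
      refine (Ideal.unit_mul_mem_iff_mem _ hunit).1 ?_
      rw [hsum]
      exact Ideal.sub_mem _ (Ideal.subset_span (Set.mem_insert _ _)) (Ideal.sum_mem _ fun i hi ↦
        Ideal.mul_mem_left _ _ (Ideal.subset_span (Or.inr hi)))
    · exact Ideal.subset_span (Or.inr (Finset.mem_erase.2 ⟨hba, hb⟩))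

lemma isLocalRing_quotient_span_singleton {A : Type*} [CommRing A] [IsLocalRing A] {x : A}
    (hx : x ∈ maximalIdeal A) : IsLocalRing (A ⧸ Ideal.span {x}) :=
  have : Nontrivial (A ⧸ Ideal.span {x}) := Ideal.Quotient.nontrivial_iff.2
    (ne_top_of_le_ne_top Ideal.IsPrime.ne_top' ((Ideal.span_singleton_le_iff_mem _).2 hx))
  .of_surjective' _ Ideal.Quotient.mk_surjective

lemma map_mk_maximalIdeal {A : Type*} [CommRing A] [IsLocalRing A] (I : Ideal A)
    [IsLocalRing (A ⧸ I)] :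
    (maximalIdeal A).map (Ideal.Quotient.mk I) = maximalIdeal (A ⧸ I) :=
  map_maximalIdeal_of_surjective _ Ideal.Quotient.mk_surjective

lemma spanFinrank_maximalIdeal_quotient_add_one_le {A : Type*} [CommRing A] [IsNoetherianRing A]
    [IsLocalRing A] {x : A} (hx : x ∈ maximalIdeal A) (hx2 : x ∉ maximalIdeal A ^ 2)
    [IsLocalRing (A ⧸ Ideal.span {x})] :
    (maximalIdeal (A ⧸ Ideal.span {x})).spanFinrank + 1 ≤ (maximalIdeal A).spanFinrank := by
  classical
  obtain ⟨s, hcard, hs⟩ := (IsNoetherian.noetherian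
    (maximalIdeal A)).exists_span_finset_card_eq_spanFinrank
  obtain ⟨a, ha, hspan⟩ := exists_span_insert_erase_eq hs hx hx2
  have hmk : Ideal.Quotient.mk (Ideal.span {x}) x = 0 :=
    Ideal.Quotient.eq_zero_iff_mem.2 (Ideal.mem_span_singleton_self x)
  have hquot : Ideal.span ((s.erase a).image (Ideal.Quotient.mk (Ideal.span {x})) : Set _) =
      maximalIdeal (A ⧸ Ideal.span {x}) := by
    rw [← map_mk_maximalIdeal, ← hspan, Ideal.map_span, Set.image_insert_eq, hmk,
      Ideal.span_insert_zero, Finset.coe_image]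
  rw [← hcard, ← hquot, ← Finset.card_erase_add_one ha, add_le_add_iff_right]
  refine (Submodule.spanFinrank_span_le_ncard_of_finite (Finset.finite_toSet _)).trans ?_
  rw [Set.ncard_coe_finset]
  exact Finset.card_image_le

section

variable {A : Type*} [CommRing A] [IsRegularLocalRing A] {x : A} (hx : x ∈ maximalIdeal A)
  (hx2 : x ∉ maximalIdeal A ^ 2)
include hx hx2

lemma isRegularLocalRing_quotient_span_singleton : IsRegularLocalRing (A ⧸ Ideal.span {x}) := by
  have := isLocalRing_quotient_span_singleton hx
  refine .of_spanFinrank_maximalIdeal_le _ (ENat.WithBot.add_le_add_one_right_iff.1 ?_)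
  calc ((maximalIdeal (A ⧸ Ideal.span {x})).spanFinrank + 1 : WithBot ℕ∞)
    _ ≤ (maximalIdeal A).spanFinrank :=
      mod_cast spanFinrank_maximalIdeal_quotient_add_one_le hx hx2
    _ = ringKrullDim A := IsRegularLocalRing.spanFinrank_maximalIdeal
    _ ≤ ringKrullDim (A ⧸ Ideal.span {x}) + 1 := by
      simpa using ringKrullDim_le_ringKrullDim_quotient_add_encard {x} (by
        rwa [ringJacobson_eq_maximalIdeal, Set.singleton_subset_iff])

lemma ringKrullDim_quotient_span_singleton_add_one :
    ringKrullDim (A ⧸ Ideal.span {x}) + 1 = ringKrullDim A := by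
  have := isRegularLocalRing_quotient_span_singleton hx hx2
  refine le_antisymm ?_ ?_
  · rw [← IsRegularLocalRing.spanFinrank_maximalIdeal,
      ← IsRegularLocalRing.spanFinrank_maximalIdeal]
    exact mod_cast spanFinrank_maximalIdeal_quotient_add_one_le hx hx2
  · simpa using ringKrullDim_le_ringKrullDim_quotient_add_encard {x} (by
      rwa [ringJacobson_eq_maximalIdeal, Set.singleton_subset_iff])

end

lemma maximalIdeal_eq_bot_of_ringKrullDim_eq_zero {A : Type*} [CommRing A] [IsRegularLocalRing A]
    (h : ringKrullDim A = 0) : maximalIdeal A = ⊥ := by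
  rw [← Submodule.spanFinrank_eq_zero_iff_eq_bot (IsNoetherian.noetherian _)]
  exact_mod_cast IsRegularLocalRing.spanFinrank_maximalIdeal.trans h

lemma isDomain_of_isDomain_quotient_span_singleton {A : Type*} [CommRing A] [IsNoetherianRing A]
    [IsLocalRing A] {x : A} (hx : x ∈ maximalIdeal A) (hmin : ∀ P ∈ minimalPrimes A, x ∉ P)
    [IsDomain (A ⧸ Ideal.span {x})] : IsDomain A := by
  have hprime : (Ideal.span {x}).IsPrime := (Ideal.Quotient.isDomain_iff_prime _).1 inferInstance
  obtain ⟨P, hP, hPx⟩ := Ideal.exists_minimalPrimes_le (bot_le : ⊥ ≤ Ideal.span {x})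
  have hPprime := Ideal.IsMinimalPrime.isPrime hP
  obtain rfl : P = ⊥ := eq_bot_of_le_maximalIdeal_mul fun p hp ↦ by
    obtain ⟨y, rfl⟩ := Ideal.mem_span_singleton'.1 (hPx hp)
    rw [mul_comm y x]
    exact Ideal.mul_mem_mul hx ((hPprime.mem_or_mem hp).resolve_right (hmin P hP))
  exact IsDomain.of_bot_isPrime A

theorem isDomain_of_isRegularLocalRing (A : Type*) [CommRing A] [IsRegularLocalRing A] :
    IsDomain A := by
  obtain ⟨d, hd⟩ : ∃ d : ℕ, ringKrullDim A = d :=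
    ⟨_, IsRegularLocalRing.spanFinrank_maximalIdeal.symm⟩
  induction d generalizing A with
  | zero =>
    exact (isField_iff_maximalIdeal_eq.2 (maximalIdeal_eq_bot_of_ringKrullDim_eq_zero hd)).isDomain
  | succ d ih =>
    obtain ⟨x, hx, hx2, hmin⟩ := exists_mem_maximalIdeal_notMem_sq_notMem_minimalPrimes A
      (by rw [hd]; exact mod_cast d.succ_ne_zero)
    have := isRegularLocalRing_quotient_span_singleton hx hx2
    have := ih (A ⧸ Ideal.span {x}) (ENat.WithBot.add_one_cancel.1
      (by rw [ringKrullDim_quotient_span_singleton_add_one hx hx2, hd, Nat.cast_succ]))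
    exact isDomain_of_isDomain_quotient_span_singleton hx hmin

lemma isWeaklyRegular_cons_of_quotient {A : Type*} [CommRing A] {x : A} (hx : IsSMulRegular A x)
    {rs : List A} (h : IsWeaklyRegular (A ⧸ Ideal.span {x})
      (rs.map (Ideal.Quotient.mk (Ideal.span {x})))) : IsWeaklyRegular A (x :: rs) := by
  rw [isWeaklyRegular_cons_iff]
  have e : QuotSMulTop x A ≃ₗ[A] A ⧸ Ideal.span {x} :=
    Submodule.quotEquivOfEq _ _ (by simp [← Submodule.ideal_span_singleton_smul])
  rw [e.isWeaklyRegular_congr]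
  exact ⟨hx, (isWeaklyRegular_map_algebraMap_iff _ _ rs).1 h⟩

lemma ofList_cons_eq_of_map_eq {A : Type*} [CommRing A] {I : Ideal A} {x : A} (hx : x ∈ I)
    {rs : List A} (h : Ideal.ofList (rs.map (Ideal.Quotient.mk (Ideal.span {x}))) =
      I.map (Ideal.Quotient.mk (Ideal.span {x}))) : Ideal.ofList (x :: rs) = I := by
  have hcomap := congrArg (Ideal.comap (Ideal.Quotient.mk (Ideal.span {x}))) h
  rw [← Ideal.map_ofList, Ideal.comap_map_of_surjective _ Ideal.Quotient.mk_surjective,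
    Ideal.comap_map_of_surjective _ Ideal.Quotient.mk_surjective, ← RingHom.ker_eq_comap_bot,
    Ideal.mk_ker] at hcomap
  rw [Ideal.ofList_cons, sup_comm, hcomap, sup_eq_left]
  exact (Ideal.span_singleton_le_iff_mem _).2 hx

theorem exists_isWeaklyRegular_ofList_eq_maximalIdeal {A : Type*} [CommRing A]
    [IsRegularLocalRing A] {d : ℕ} (hd : ringKrullDim A = d) :
    ∃ rs : List A, rs.length = d ∧ IsWeaklyRegular A rs ∧ Ideal.ofList rs = maximalIdeal A := by
  induction d generalizing A with
  | zero =>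
    exact ⟨[], rfl, .nil A A, by simp [maximalIdeal_eq_bot_of_ringKrullDim_eq_zero hd]⟩
  | succ d ih =>
    obtain ⟨x, hx, hx2, -⟩ := exists_mem_maximalIdeal_notMem_sq_notMem_minimalPrimes A
      (by rw [hd]; exact mod_cast d.succ_ne_zero)
    have := isRegularLocalRing_quotient_span_singleton hx hx2
    have := isDomain_of_isRegularLocalRing A
    obtain ⟨rs', rfl, hreg, hof⟩ := ih (A := A ⧸ Ideal.span {x}) (ENat.WithBot.add_one_cancel.1
      (by rw [ringKrullDim_quotient_span_singleton_add_one hx hx2, hd, Nat.cast_succ]))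
    obtain ⟨rs, rfl⟩ := List.map_surjective_iff.2 Ideal.Quotient.mk_surjective rs'
    refine ⟨x :: rs, by simp, ?_, ofList_cons_eq_of_map_eq hx (by rw [hof, map_mk_maximalIdeal])⟩
    have hx0 : x ≠ 0 := fun h ↦ hx2 (h ▸ zero_mem _)
    exact isWeaklyRegular_cons_of_quotient (.of_ne_zero hx0) hreg

end RegularLocalRing

/-! ### Ext groups of modules annihilated by a power of an ideal -/

section TorsionExt

open Abelian RingTheory.Sequence

variable {A : Type u} [CommRing A]

/-- The vanishing of `Ext^i(N, Y)` for all finite modules `N` annihilated by a power of `I`. -/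
def TorsionExtVanishes (I : Ideal A) (Y : ModuleCat.{u} A) (i : ℕ) : Prop :=
  ∀ (N : Type u) [AddCommGroup N] [Module A N] [Module.Finite A N] (t : ℕ),
    I ^ t ≤ Module.annihilator A N → Subsingleton (Ext (ModuleCat.of A N) Y i)

lemma torsionExtVanishes_of_isRegular [IsNoetherianRing A] {I : Ideal A} {Y : ModuleCat.{u} A}
    [Module.Finite A Y] (hI : I • (⊤ : Submodule A Y) < ⊤) {rs : List A} (hrs : ∀ r ∈ rs, r ∈ I)
    (hreg : IsRegular Y rs) {i : ℕ} (hi : i < rs.length) : TorsionExtVanishes I Y i := by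
  intro N _ _ _ t ht
  refine ModuleCat.subsingleton_ext_of_exists_isRegular I (ModuleCat.of A N) ?_ Y hI rs hrs hreg
    i hi
  rw [Module.support_eq_zeroLocus, PrimeSpectrum.zeroLocus_subset_zeroLocus_iff]
  exact fun a ha ↦ ⟨t, ht (Ideal.pow_mem_pow ha t)⟩

theorem hasProjectiveDimensionLT_of_pow_le_annihilator [IsNoetherianRing A] (m : Ideal A)
    [m.IsMaximal] (n : ℕ) [HasProjectiveDimensionLT (ModuleCat.of A (A ⧸ m)) n]
    (N : Type u) [AddCommGroup N] [Module A N] [Module.Finite A N] {t : ℕ}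
    (ht : m ^ t ≤ Module.annihilator A N) : HasProjectiveDimensionLT (ModuleCat.of A N) n := by
  revert ht
  induction ‹Module.Finite A N› using
    IsNoetherianRing.induction_on_isQuotientEquivQuotientPrime A with
  | subsingleton N =>
    intro _
    have := (ModuleCat.isZero_of_subsingleton (ModuleCat.of A N)).hasProjectiveDimensionLT_zero
    exact hasProjectiveDimensionLT_of_ge _ 0 n n.zero_le
  | quotient N p f =>
    intro ht
    have hmp : m ≤ p.asIdeal := p.2.le_of_pow_le
      (by rwa [f.annihilator_eq, Ideal.annihilator_quotient] at ht)
    have hp : m = p.asIdeal := Ideal.IsMaximal.eq_of_le ‹_› p.2.ne_top hmp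
    exact hasProjectiveDimensionLT_of_iso
      ((Submodule.quotEquivOfEq _ _ hp).trans f.symm).toModuleIso n
  | exact N₁ N₂ N₃ f g hf hg hfg h₁ h₃ =>
    intro ht
    have hS := ModuleCat.shortComplex_shortExact
      (ModuleCat.shortComplexOfCompEqZero f g hfg.linearMap_comp_eq_zero) hfg hf hg
    exact hS.hasProjectiveDimensionLT_X₂ n (h₁ (ht.trans (f.annihilator_le_of_injective hf)))
      (h₃ (ht.trans (g.annihilator_le_of_surjective hg)))

lemma torsionExtVanishes_of_hasProjectiveDimensionLT [IsNoetherianRing A] (m : Ideal A)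
    [m.IsMaximal] (n : ℕ) [HasProjectiveDimensionLT (ModuleCat.of A (A ⧸ m)) n]
    (Y : ModuleCat.{u} A) : TorsionExtVanishes m Y n := by
  intro N _ _ _ t ht
  have := hasProjectiveDimensionLT_of_pow_le_annihilator m n N ht
  exact HasProjectiveDimensionLT.subsingleton _ n n le_rfl Y

lemma hasProjectiveDimensionLE_quotient_ofList [IsNoetherianRing A] [IsLocalRing A] {rs : List A}
    (hrs : IsRegular A rs) :
    HasProjectiveDimensionLE (ModuleCat.of A (A ⧸ Ideal.ofList rs)) rs.length := by
  rw [← projectiveDimension_le_iff,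
    ← projectiveDimension_eq_of_iso (Shrink.linearEquiv.{u} A (A ⧸ Ideal.ofList rs)).toModuleIso]
  exact (ModuleCat.projectiveDimension_quotient_eq_length rs hrs).le

section IsRegularLocalRing

variable [IsRegularLocalRing A] {d : ℕ} (hd : ringKrullDim A = d)
include hd

lemma exists_isRegular_ofList_eq_maximalIdeal :
    ∃ rs : List A, rs.length = d ∧ IsRegular A rs ∧ Ideal.ofList rs = maximalIdeal A := by
  obtain ⟨rs, hlen, hrs, hm⟩ := exists_isWeaklyRegular_ofList_eq_maximalIdeal hd
  exact ⟨rs, hlen, (isRegular_iff_isWeaklyRegular_of_subset_maximalIdeal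
    fun _ hr ↦ hm ▸ Ideal.subset_span hr).2 hrs, hm⟩

lemma torsionExtVanishes_maximalIdeal_of_lt {i : ℕ} (hi : i < d) :
    TorsionExtVanishes (maximalIdeal A) (ModuleCat.of A A) i := by
  obtain ⟨rs, rfl, hrs, hm⟩ := exists_isRegular_ofList_eq_maximalIdeal hd
  refine torsionExtVanishes_of_isRegular ?_ (fun _ hr ↦ hm ▸ Ideal.subset_span hr) hrs hi
  rw [smul_eq_mul, Ideal.mul_top]
  exact lt_top_iff_ne_top.2 Ideal.IsPrime.ne_top'

lemma torsionExtVanishes_maximalIdeal_succ (Y : ModuleCat.{u} A) :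
    TorsionExtVanishes (maximalIdeal A) Y (d + 1) := by
  obtain ⟨rs, rfl, hrs, hm⟩ := exists_isRegular_ofList_eq_maximalIdeal hd
  have hpd := hasProjectiveDimensionLE_quotient_ofList hrs
  rw [hm] at hpd
  exact torsionExtVanishes_of_hasProjectiveDimensionLT (maximalIdeal A) (rs.length + 1) Y

end IsRegularLocalRing

end TorsionExt

/-! ### Injectivity of local cohomology in the lowest degree -/

section LinearMapExtension

variable {A : Type*} [CommRing A]

lemma exists_linearMap_comp_eq_of_surjective {M N P : Type*} [AddCommGroup M] [Module A M]
    [AddCommGroup N] [Module A N] [AddCommGroup P] [Module A P] {f : M →ₗ[A] N}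
    (hf : Function.Surjective f) {g : M →ₗ[A] P} (hg : LinearMap.ker f ≤ LinearMap.ker g) :
    ∃ h : N →ₗ[A] P, h ∘ₗ f = g := by
  refine ⟨(LinearMap.ker f).liftQ g hg ∘ₗ (f.quotKerEquivOfSurjective hf).symm, ?_⟩
  ext x
  have hx : (f.quotKerEquivOfSurjective hf).symm (f x) = Submodule.Quotient.mk x := by
    rw [LinearEquiv.symm_apply_eq]
    rfl
  exact congrArg _ hx

lemma exists_ker_mkQ_pow_comp_subtype_le_ker [IsNoetherianRing A] (I J : Ideal A) {P : Type*}
    [AddCommGroup P] [Module A P] (f : J →ₗ[A] P) {t : ℕ}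
    (ht : I ^ t ≤ (LinearMap.range f).annihilator) :
    ∃ k, LinearMap.ker ((I ^ k).mkQ ∘ₗ J.subtype) ≤ LinearMap.ker f := by
  obtain ⟨k, hk⟩ := Ideal.exists_pow_inf_eq_pow_smul I J
  refine ⟨k + t, fun x hx ↦ ?_⟩
  have hxI : (x : A) ∈ I ^ (k + t) := (Submodule.Quotient.mk_eq_zero _).1 hx
  have hxJ : (x : A) ∈ I ^ t • J := by
    have hmem : (x : A) ∈ I ^ (k + t) • (⊤ : Ideal A) ⊓ J := ⟨by simpa using hxI, x.2⟩
    rw [hk (k + t) (Nat.le_add_right k t), Nat.add_sub_cancel_left] at hmem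
    exact (smul_mono_right (I ^ t) inf_le_right : _ ≤ I ^ t • J) hmem
  have hle : I ^ t • J ≤ (LinearMap.ker f).map J.subtype := Submodule.smul_le.2 fun a ha y hy ↦
    ⟨a • ⟨y, hy⟩, (f.map_smul a ⟨y, hy⟩).trans
      (Submodule.mem_annihilator.1 (ht ha) _ ⟨_, rfl⟩), rfl⟩
  obtain ⟨x', hx', hxx'⟩ := hle hxJ
  rwa [← Subtype.ext hxx']

lemma pow_le_annihilator_quotient (I : Ideal A) {s t : ℕ} (h : s ≤ t) :
    I ^ t ≤ Module.annihilator A (A ⧸ I ^ s) :=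
  (Ideal.pow_le_pow_right h).trans Ideal.annihilator_quotient.ge

lemma pow_le_annihilator_pi_quotient (I : Ideal A) (t : ℕ) (ι : Type*) :
    I ^ t ≤ Module.annihilator A (ι → A ⧸ I ^ t) := fun _ ha ↦ Module.mem_annihilator.2 fun x ↦
  funext fun i ↦ Module.mem_annihilator.1 (pow_le_annihilator_quotient I le_rfl ha) (x i)

lemma le_annihilator_range {I : Ideal A} {M N : Type*} [AddCommGroup M] [Module A M]
    [AddCommGroup N] [Module A N] (h : I ≤ Module.annihilator A N) (f : M →ₗ[A] N) :
    I ≤ Module.annihilator A (LinearMap.range f) :=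
  h.trans ((LinearMap.range f).subtype.annihilator_le_of_injective Subtype.val_injective)

end LinearMapExtension

namespace LocCoh

open Abelian

variable {A : Type u} [CommRing A] {I : Ideal A}

lemma subsingleton_of_torsionExtVanishes {p : ℕ} {Y : ModuleCat.{u} A}
    (h : TorsionExtVanishes I Y p) : Subsingleton (LocCoh I p Y) :=
  subsingleton fun t ↦ h _ t (pow_le_annihilator_quotient I le_rfl)

lemma powQuotMap_hom_surjective (I : Ideal A) {s t : ℕ} (h : s ≤ t) :
    Function.Surjective (powQuotMap I h).hom :=
  Submodule.factor_surjective (Ideal.pow_le_pow_right h)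

lemma powQuot_hom_ext {t : ℕ} {X : ModuleCat.{u} A} {f g : powQuot I t ⟶ X}
    (h : f.hom (Submodule.Quotient.mk 1) = g.hom (Submodule.Quotient.mk 1)) : f = g :=
  ModuleCat.hom_ext (Submodule.linearMap_qext _ (LinearMap.ext_ring h))

section OfExt

variable {N : Type u} [AddCommGroup N] [Module A N] {t : ℕ} (ht : I ^ t ≤ Module.annihilator A N)

/-- The morphism from `A ⧸ I ^ t` determined by an element of a module annihilated by `I ^ t`. -/
noncomputable def point : N →ₗ[A] (powQuot I t ⟶ ModuleCat.of A N) where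
  toFun n := ModuleCat.ofHom ((I ^ t).liftQ (LinearMap.toSpanSingleton A N n) fun _ ha ↦
    Module.mem_annihilator.1 (ht ha) n)
  map_add' n n' := powQuot_hom_ext (smul_add 1 n n')
  map_smul' a n := powQuot_hom_ext (smul_comm 1 a n)

lemma point_mk_one (n : N) : (point ht n).hom (Submodule.Quotient.mk 1) = n := one_smul A n

/-- The map `N → H^p_I(Y)` given by an extension class in `Ext^p(N, Y)`, when `N` is annihilated
by a power of `I`. -/
noncomputable def ofExt (Y : ModuleCat.{u} A) (p : ℕ) :
    Ext (ModuleCat.of A N) Y p →ₗ[A] N →ₗ[A] LocCoh I p Y :=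
  LinearMap.mk₂ A (fun ξ n ↦ of I p Y t ((Ext.mk₀ (point ht n)).comp ξ (zero_add p)))
    (fun ξ ξ' n ↦ by rw [Ext.comp_add, map_add])
    (fun a ξ n ↦ by rw [Ext.comp_smul, map_smul])
    (fun ξ n n' ↦ by rw [map_add, Ext.mk₀_add, Ext.add_comp, map_add])
    (fun a ξ n ↦ by rw [map_smul, Ext.mk₀_smul, Ext.smul_comp, map_smul])

variable {Y : ModuleCat.{u} A} {p : ℕ}

lemma ofExt_apply (ξ : Ext (ModuleCat.of A N) Y p) (n : N) :
    ofExt ht Y p ξ n = of I p Y t ((Ext.mk₀ (point ht n)).comp ξ (zero_add p)) := rfl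

lemma ofExt_comp {N' : Type u} [AddCommGroup N'] [Module A N']
    (ht' : I ^ t ≤ Module.annihilator A N') (f : N' →ₗ[A] N) (ξ : Ext (ModuleCat.of A N) Y p) :
    ofExt ht' Y p ((Ext.mk₀ (ModuleCat.ofHom f)).comp ξ (zero_add p)) = ofExt ht Y p ξ ∘ₗ f := by
  ext n
  have h : point ht' n ≫ ModuleCat.ofHom f = point ht (f n) := powQuot_hom_ext
    ((congrArg f (point_mk_one ht' n)).trans (point_mk_one ht (f n)).symm)
  rw [ofExt_apply, LinearMap.comp_apply, ofExt_apply, ← h, ← Ext.mk₀_comp_mk₀_assoc]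

lemma ofExt_eq_comp_point (h : N →ₗ[A] LocCoh I p Y) {n : N} {x : Ext (powQuot I t) Y p}
    (hx : of I p Y t x = h n) :
    ofExt (pow_le_annihilator_quotient I le_rfl) Y p x = h ∘ₗ (point ht n).hom := by
  refine Submodule.linearMap_qext _ (LinearMap.ext_ring ?_)
  have hpoint : point (pow_le_annihilator_quotient I le_rfl) (Submodule.Quotient.mk 1) =
      𝟙 (powQuot I t) := powQuot_hom_ext (point_mk_one _ _)
  calc ofExt (pow_le_annihilator_quotient I le_rfl) Y p x (Submodule.Quotient.mk 1)
      = of I p Y t x := by rw [ofExt_apply, hpoint, Ext.mk₀_id_comp]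
    _ = h ((point ht n).hom (Submodule.Quotient.mk 1)) := by rw [hx, point_mk_one]

/-- The morphism from a finite power of `A ⧸ I ^ t` determined by a finite family of elements of a
module annihilated by `I ^ t`. -/
noncomputable def points {ι : Type} [Fintype ι] (x : ι → N) :
    ModuleCat.of A (ι → A ⧸ I ^ t) ⟶ ModuleCat.of A N :=
  ∑ i, ModuleCat.ofHom (LinearMap.proj i) ≫ point ht (x i)

lemma points_hom_apply {ι : Type} [Fintype ι] (x : ι → N) (v : ι → A ⧸ I ^ t) :
    (points ht x).hom v = ∑ i, (point ht (x i)).hom (v i) := by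
  rw [points, ModuleCat.hom_sum, LinearMap.sum_apply]
  rfl

lemma points_hom_surjective {ι : Type} [Fintype ι] {x : ι → N}
    (hx : Submodule.span A (Set.range x) = ⊤) : Function.Surjective (points ht x).hom := by
  classical
  rw [← LinearMap.range_eq_top, eq_top_iff, ← hx, Submodule.span_le]
  rintro _ ⟨i, rfl⟩
  refine ⟨Pi.single i (Submodule.Quotient.mk 1), ?_⟩
  rw [points_hom_apply, Finset.sum_eq_single_of_mem i (Finset.mem_univ i), Pi.single_eq_same,
    point_mk_one]
  intro j _ hj
  rw [Pi.single_eq_of_ne hj, map_zero]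

lemma points_comp_eq_zero {ι : Type} [Fintype ι] {x : ι → N} {ξ : Ext (ModuleCat.of A N) Y p}
    (hξ : ∀ i, (Ext.mk₀ (point ht (x i))).comp ξ (zero_add p) = 0) :
    (Ext.mk₀ (points ht x)).comp ξ (zero_add p) = 0 := by
  rw [points, Ext.mk₀_sum, Ext.sum_comp]
  refine Finset.sum_eq_zero fun i _ ↦ ?_
  rw [← Ext.mk₀_comp_mk₀_assoc, hξ i, Ext.comp_zero]

lemma exists_ofExt_eq_comp_points (h : N →ₗ[A] LocCoh I p Y) {ι : Type} [Fintype ι] {x : ι → N}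
    {y : ι → Ext (powQuot I t) Y p} (hy : ∀ i, of I p Y t (y i) = h (x i)) :
    ∃ η, ofExt (pow_le_annihilator_pi_quotient I t ι) Y p η =
      h ∘ₗ (points ht x).hom := by
  have hpi := pow_le_annihilator_pi_quotient I t ι
  let π (i : ι) : (ι → A ⧸ I ^ t) →ₗ[A] A ⧸ I ^ t := LinearMap.proj i
  let η (i : ι) : Ext (ModuleCat.of A (ι → A ⧸ I ^ t)) Y p :=
    (Ext.mk₀ (ModuleCat.ofHom (π i))).comp (y i) (zero_add p)
  have hη (i : ι) : ofExt hpi Y p (η i) = (h ∘ₗ (point ht (x i)).hom) ∘ₗ π i :=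
    (ofExt_comp (pow_le_annihilator_quotient I le_rfl) hpi (π i) (y i)).trans
      (congrArg (· ∘ₗ π i) (ofExt_eq_comp_point ht h (hy i)))
  refine ⟨∑ i, η i, LinearMap.ext fun v ↦ ?_⟩
  rw [_root_.map_sum, Finset.sum_congr rfl fun i _ ↦ hη i, LinearMap.sum_apply,
    LinearMap.comp_apply, points_hom_apply, _root_.map_sum]
  rfl

end OfExt

lemma exists_forall_of_eq {ι : Type} [Finite ι] {p : ℕ} {Y : ModuleCat.{u} A}
    (z : ι → LocCoh I p Y) (t : ℕ) : ∃ s, t ≤ s ∧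
      ∃ x : ι → Ext (powQuot I s) Y p, ∀ i, of I p Y s (x i) = z i := by
  have := Fintype.ofFinite ι
  choose r y hy using fun i ↦ exists_of (z i)
  have hr (i : ι) : r i ≤ t ⊔ Finset.univ.sup r := le_sup_of_le_right (Finset.le_sup (by simp))
  exact ⟨_, le_sup_left, fun i ↦ (Ext.mk₀ (powQuotMap I (hr i))).comp (y i) (zero_add p),
    fun i ↦ (of_comp I p Y (hr i) (y i)).trans (hy i)⟩

lemma smul_ext_powQuot_eq_zero {t : ℕ} {a : A} (ha : a ∈ I ^ t) {Y : ModuleCat.{u} A} {p : ℕ}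
    (x : Ext (powQuot I t) Y p) : a • x = 0 := by
  have hz : a • 𝟙 (powQuot I t) = 0 :=
    powQuot_hom_ext ((Submodule.Quotient.mk_eq_zero _).2 (Ideal.mul_mem_right _ _ ha))
  rw [← Ext.mk₀_id_comp x, ← Ext.smul_comp, ← Ext.mk₀_smul, hz, Ext.mk₀_zero, Ext.zero_comp]

lemma exists_pow_le_annihilator {p : ℕ} {Y : ModuleCat.{u} A} {P : Submodule A (LocCoh I p Y)}
    (hP : P.FG) : ∃ t, I ^ t ≤ P.annihilator := by
  obtain ⟨n, z, rfl⟩ := Submodule.fg_iff_exists_fin_generating_family.1 hP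
  obtain ⟨t, -, x, hx⟩ := exists_forall_of_eq z 0
  refine ⟨t, fun a ha ↦ (Submodule.mem_annihilator_span _ _).2 ?_⟩
  rintro ⟨_, i, rfl⟩
  change a • z i = 0
  rw [← hx i, ← map_smul, smul_ext_powQuot_eq_zero ha, map_zero]

section Baer

variable [IsNoetherianRing A] {Y : ModuleCat.{u} A} {d : ℕ}
  (hlt : ∀ i, i + 1 = d → TorsionExtVanishes I Y i) (hgt : TorsionExtVanishes I Y (d + 1))
  {N N' : Type u} [AddCommGroup N] [Module A N] [Module.Finite A N] [AddCommGroup N'] [Module A N']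
  {t : ℕ} (ht : I ^ t ≤ Module.annihilator A N)

include hlt ht in
lemma eq_zero_of_precomp_eq_zero {g : N →ₗ[A] N'} (hg : Function.Surjective g)
    {ξ : Ext (ModuleCat.of A N') Y d}
    (hξ : (Ext.mk₀ (ModuleCat.ofHom g)).comp ξ (zero_add d) = 0) : ξ = 0 := by
  cases d with
  | zero =>
    have : Epi (ModuleCat.ofHom g) := (ModuleCat.epi_iff_surjective _).2 hg
    exact Ext.precomp_mk₀_injective_of_epi Y (ModuleCat.ofHom g)
      (hξ.trans (Ext.comp_zero (h := zero_add 0) ..).symm)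
  | succ d =>
    have hS := LinearMap.shortExact_shortComplexKer hg
    obtain ⟨η, rfl⟩ := Ext.contravariant_sequence_exact₃ hS Y ξ hξ (add_comm 1 d)
    have := hlt d rfl (LinearMap.ker g) t (ht.trans
      ((LinearMap.ker g).subtype.annihilator_le_of_injective Subtype.val_injective))
    rw [Subsingleton.elim η 0, Ext.comp_zero]

omit [IsNoetherianRing A] in
include hgt ht in
lemma exists_precomp_eq {f : N' →ₗ[A] N} (hf : Function.Injective f)
    (ξ : Ext (ModuleCat.of A N') Y d) :
    ∃ η, (Ext.mk₀ (ModuleCat.ofHom f)).comp η (zero_add d) = ξ := by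
  have hS := ModuleCat.shortComplex_shortExact (ModuleCat.shortComplexOfCompEqZero f
    (LinearMap.range f).mkQ f.range_mkQ_comp) f.exact_map_mkQ_range hf (Submodule.mkQ_surjective _)
  have := hgt (N ⧸ LinearMap.range f) t (ht.trans
    ((LinearMap.range f).mkQ.annihilator_le_of_surjective (Submodule.mkQ_surjective _)))
  exact Ext.contravariant_sequence_exact₁ hS Y ξ (add_comm 1 d) (Subsingleton.elim _ _)

include hlt

lemma of_injective (t : ℕ) : Function.Injective (of I d Y t) :=
  (injective_iff_map_eq_zero _).2 fun x hx ↦ by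
    obtain ⟨s, hs, h⟩ := exists_of_eq_zero hx
    exact eq_zero_of_precomp_eq_zero hlt (pow_le_annihilator_quotient I le_rfl)
      (powQuotMap_hom_surjective I hs) h

lemma ofExt_injective : Function.Injective (ofExt ht Y d) :=
  (injective_iff_map_eq_zero _).2 fun ξ hξ ↦ by
    obtain ⟨n, x, hx⟩ := Module.Finite.exists_fin (R := A) (M := N)
    exact eq_zero_of_precomp_eq_zero hlt
      (pow_le_annihilator_pi_quotient I t _) (points_hom_surjective ht hx)
      (points_comp_eq_zero ht fun i ↦ (injective_iff_map_eq_zero _).1 (of_injective hlt t) _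
        (LinearMap.congr_fun hξ (x i)))

lemma exists_ofExt_eq_of_surjective (ht' : I ^ t ≤ Module.annihilator A N') {c : N →ₗ[A] N'}
    (hc : Function.Surjective c) {h : N' →ₗ[A] LocCoh I d Y} {η : Ext (ModuleCat.of A N) Y d}
    (hη : ofExt ht Y d η = h ∘ₗ c) : ∃ ξ, ofExt ht' Y d ξ = h := by
  have hK := ht.trans
    ((LinearMap.ker c).subtype.annihilator_le_of_injective Subtype.val_injective)
  have hker : (Ext.mk₀ (ModuleCat.ofHom (LinearMap.ker c).subtype)).comp η (zero_add d) = 0 := by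
    refine (injective_iff_map_eq_zero _).1 (ofExt_injective hlt hK) _ ?_
    rw [ofExt_comp ht, hη, LinearMap.comp_assoc, LinearMap.comp_ker_subtype, LinearMap.comp_zero]
  obtain ⟨ξ, rfl⟩ :=
    Ext.contravariant_sequence_exact₂ (LinearMap.shortExact_shortComplexKer hc) Y η hker
  exact ⟨ξ, (LinearMap.cancel_right hc).1 ((ofExt_comp ht' ht c ξ).symm.trans hη)⟩

lemma exists_ofExt_eq (h : N →ₗ[A] LocCoh I d Y) :
    ∃ s, ∃ hs : t ≤ s, ∃ ξ, ofExt ((Ideal.pow_le_pow_right hs).trans ht) Y d ξ = h := by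
  obtain ⟨n, x, hx⟩ := Module.Finite.exists_fin (R := A) (M := N)
  obtain ⟨s, hs, y, hy⟩ := exists_forall_of_eq (h ∘ x) t
  have hts := (Ideal.pow_le_pow_right hs).trans ht
  obtain ⟨η, hη⟩ := exists_ofExt_eq_comp_points hts h hy
  exact ⟨s, hs, exists_ofExt_eq_of_surjective hlt _ hts (points_hom_surjective hts hx) hη⟩

include hgt in
theorem baer : Module.Baer A (LocCoh I d Y) := by
  intro J f
  obtain ⟨t, ht⟩ := exists_pow_le_annihilator (Module.Finite.iff_fg.1 (Module.Finite.range f))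
  obtain ⟨k, hk⟩ := exists_ker_mkQ_pow_comp_subtype_le_ker I J f ht
  let g : J →ₗ[A] A ⧸ I ^ k := (I ^ k).mkQ ∘ₗ J.subtype
  obtain ⟨f', rfl⟩ := exists_linearMap_comp_eq_of_surjective g.surjective_rangeRestrict
    (g.ker_rangeRestrict.trans_le hk)
  obtain ⟨s, hs, ξ, rfl⟩ := exists_ofExt_eq hlt
    (le_annihilator_range (pow_le_annihilator_quotient I le_rfl) g) f'
  have hQ := pow_le_annihilator_quotient I hs
  obtain ⟨η, rfl⟩ := exists_precomp_eq hgt hQ (LinearMap.range g).subtype_injective ξ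
  refine ⟨ofExt hQ Y d η ∘ₗ (I ^ k).mkQ, fun x hx ↦ ?_⟩
  rw [ofExt_comp hQ]
  rfl

end Baer

end LocCoh

/-! ### The duality pairing -/

section Resolution

variable {A : Type u} [CommRing A]

lemma exists_comp_eq_of_baer {M N P : Type u} [AddCommGroup M] [Module A M] [AddCommGroup N]
    [Module A N] [AddCommGroup P] [Module A P] (hP : Module.Baer A P) {f : M →ₗ[A] N}
    {g : M →ₗ[A] P} (hg : LinearMap.ker f ≤ LinearMap.ker g) : ∃ h : N →ₗ[A] P, h ∘ₗ f = g := by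
  obtain ⟨k, rfl⟩ := exists_linearMap_comp_eq_of_surjective f.surjective_rangeRestrict
    (f.ker_rangeRestrict.trans_le hg)
  obtain ⟨h, rfl⟩ := hP.extension_property _ (LinearMap.range f).subtype_injective k
  exact ⟨h, rfl⟩

lemma sum_proj_comp_single (n : ℕ) :
    ∑ i : Fin n, ModuleCat.ofHom (LinearMap.proj i : (Fin n → A) →ₗ[A] A) ≫
      ModuleCat.ofHom (LinearMap.single A (fun _ ↦ A) i) = 𝟙 (ModuleCat.of A (Fin n → A)) := by
  refine ModuleCat.hom_ext (LinearMap.ext fun x ↦ ?_)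
  rw [ModuleCat.hom_sum, LinearMap.sum_apply]
  exact Finset.univ_sum_single x

lemma single_comp_eq_smul_id {n : ℕ} (i : Fin n)
    (g : ModuleCat.of A (Fin n → A) ⟶ ModuleCat.of A A) :
    ModuleCat.ofHom (LinearMap.single A (fun _ ↦ A) i) ≫ g =
      g.hom (Pi.single i 1) • 𝟙 (ModuleCat.of A A) :=
  ModuleCat.hom_ext (LinearMap.ext_ring (mul_one _).symm)

end Resolution

namespace LocCoh

open Abelian

variable {A : Type u} [CommRing A] {I : Ideal A}

variable (I) in
/-- The pairing `H^p_I(M) × Ext^q(M, Y) → H^d_I(Y)` given by composition of extension classes,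
for `p + q = d`. -/
noncomputable def pairing {p q d : ℕ} (h : p + q = d) (Y M : ModuleCat.{u} A) :
    LocCoh I p M →ₗ[A] Ext M Y q →ₗ[A] LocCoh I d Y :=
  (post I h M Y).flip

variable {p q d : ℕ} {Y M N : ModuleCat.{u} A}

lemma pairing_map (h : p + q = d) (f : M ⟶ N) (z : LocCoh I p M) (e : Ext N Y q) :
    pairing I h Y N (map I p f z) e = pairing I h Y M z ((Ext.mk₀ f).comp e (zero_add q)) :=
  (post_comp (add_zero p) h (zero_add q) (Ext.mk₀ f) e z).symm

lemma pairing_post {r s : ℕ} (h : p + s = d) (hr : p + 1 = r) (h' : r + q = d) (hs : 1 + q = s)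
    (χ : Ext M N 1) (z : LocCoh I p M) (e : Ext N Y q) :
    pairing I h' Y N (post I hr M N χ z) e = pairing I h Y M z (χ.comp e hs) :=
  (post_comp hr h' hs χ e z).symm

lemma map_sum {ι : Type*} [Fintype ι] (f : ι → (M ⟶ N)) (z : LocCoh I p M) :
    map I p (∑ i, f i) z = ∑ i, map I p (f i) z := by
  rw [map, Ext.mk₀_sum, _root_.map_sum, LinearMap.sum_apply]

lemma sum_map_single_map_proj {n : ℕ} (z : LocCoh I p (ModuleCat.of A (Fin n → A))) :
    ∑ i, map I p (ModuleCat.ofHom (LinearMap.single A (fun _ ↦ A) i))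
      (map I p (ModuleCat.ofHom (LinearMap.proj i)) z) = z := by
  rw [← Finset.sum_congr rfl fun i _ ↦ map_comp _ _ z, ← map_sum, sum_proj_comp_single, map_id]

lemma subsingleton_free (n : ℕ) [Subsingleton (LocCoh I p (ModuleCat.of A A))] :
    Subsingleton (LocCoh I p (ModuleCat.of A (Fin n → A))) :=
  subsingleton_of_forall_eq 0 fun z ↦ by
    rw [← sum_map_single_map_proj z]
    exact Finset.sum_eq_zero fun i _ ↦ by
      rw [Subsingleton.elim (map I p (ModuleCat.ofHom (LinearMap.proj i)) z) 0, map_zero]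

lemma pairing_free_injective (n : ℕ) (h : d + 0 = d) : Function.Injective
    (pairing I h (ModuleCat.of A A) (ModuleCat.of A (Fin n → A))) :=
  (injective_iff_map_eq_zero _).2 fun z hz ↦ by
    rw [← sum_map_single_map_proj z]
    refine Finset.sum_eq_zero fun i _ ↦ ?_
    exact (congrArg _ (LinearMap.congr_fun hz (Ext.mk₀ _))).trans (_root_.map_zero _)

lemma pairing_map_single_mk₀ {n : ℕ} (h : d + 0 = d) (i : Fin n)
    (z : LocCoh I d (ModuleCat.of A A)) (g : ModuleCat.of A (Fin n → A) ⟶ ModuleCat.of A A) :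
    pairing I h (ModuleCat.of A A) _
      (map I d (ModuleCat.ofHom (LinearMap.single A (fun _ ↦ A) i)) z) (Ext.mk₀ g) =
        g.hom (Pi.single i 1) • z := by
  rw [pairing_map, Ext.mk₀_comp_mk₀, single_comp_eq_smul_id, Ext.mk₀_smul, _root_.map_smul]
  exact congrArg _ (map_id z)

lemma pairing_free_surjective (n : ℕ) (h : d + 0 = d) : Function.Surjective
    (pairing I h (ModuleCat.of A A) (ModuleCat.of A (Fin n → A))) := by
  intro φ
  refine ⟨∑ i, map I d (ModuleCat.ofHom (LinearMap.single A (fun _ ↦ A) i))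
    (φ (Ext.mk₀ (ModuleCat.ofHom (LinearMap.proj i)))), LinearMap.ext fun e ↦ ?_⟩
  obtain ⟨g, rfl⟩ := (Ext.mk₀_bijective _ _).2 e
  have hg : g = ∑ i, g.hom (Pi.single i 1) • ModuleCat.ofHom (LinearMap.proj i) := by
    conv_lhs => rw [← Category.id_comp g, ← sum_proj_comp_single, Preadditive.sum_comp]
    exact Finset.sum_congr rfl fun i _ ↦ by
      rw [Category.assoc, single_comp_eq_smul_id, Linear.comp_smul, Category.comp_id]
  conv_rhs => rw [hg, Ext.mk₀_sum, _root_.map_sum]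
  rw [_root_.map_sum, LinearMap.sum_apply]
  exact Finset.sum_congr rfl fun i _ ↦ by
    rw [pairing_map_single_mk₀, Ext.mk₀_smul, _root_.map_smul]

section ShortExact

variable {S : ShortComplex (ModuleCat.{u} A)} (hS : S.ShortExact)
include hS

lemma pairing_injective_of_baer (hB : Module.Baer A (LocCoh I d Y)) (h : d + 0 = d)
    (h₁ : Function.Surjective (pairing I h Y S.X₁))
    (h₂ : Function.Injective (pairing I h Y S.X₂)) (h₃ : Subsingleton (LocCoh I (d + 1) S.X₁)) :
    Function.Injective (pairing I h Y S.X₃) := by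
  refine (injective_iff_map_eq_zero _).2 fun z hz ↦ ?_
  obtain ⟨y, rfl⟩ := exists_map_eq_of_post_extClass_eq_zero hS rfl z (Subsingleton.elim _ _)
  obtain ⟨φ, hφ⟩ := exists_comp_eq_of_baer hB (f := (Ext.mk₀ S.f).precompOfLinear A Y (zero_add 0))
    (g := pairing I h Y S.X₂ y) fun e he ↦ by
      obtain ⟨e', rfl⟩ := Ext.contravariant_sequence_exact₂ hS _ e he
      exact (pairing_map h S.g y e').symm.trans (LinearMap.congr_fun hz e')
  obtain ⟨x, rfl⟩ := h₁ φ
  have hx : map I d S.f x = y :=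
    h₂ (LinearMap.ext fun e ↦ (pairing_map h S.f x e).trans (LinearMap.congr_fun hφ e))
  rw [← hx, ← map_comp, S.zero, map, Ext.mk₀_zero, map_zero, LinearMap.zero_apply]

lemma pairing_surjective_of_baer (hB : Module.Baer A (LocCoh I d Y)) (h : d + 0 = d)
    (h₂ : Function.Surjective (pairing I h Y S.X₂)) :
    Function.Surjective (pairing I h Y S.X₃) := by
  intro φ
  have := hS.epi_g
  obtain ⟨ψ, hψ⟩ := hB.extension_property ((Ext.mk₀ S.g).precompOfLinear A Y (zero_add 0))
    (Ext.precomp_mk₀_injective_of_epi Y S.g) φ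
  obtain ⟨y, rfl⟩ := h₂ ψ
  exact ⟨map I d S.g y, LinearMap.ext fun e ↦
    (pairing_map h S.g y e).trans (LinearMap.congr_fun hψ e)⟩

lemma pairing_injective_of_succ (h : p + (q + 1) = d) (h' : p + 1 + q = d)
    (h₁ : Function.Injective (pairing I h' Y S.X₁)) (h₂ : Subsingleton (LocCoh I p S.X₂)) :
    Function.Injective (pairing I h Y S.X₃) := by
  refine (injective_iff_map_eq_zero _).2 fun z hz ↦ ?_
  have hδ : post I rfl S.X₃ S.X₁ hS.extClass z = 0 :=
    (injective_iff_map_eq_zero _).1 h₁ _ (LinearMap.ext fun e ↦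
      (pairing_post h rfl h' (add_comm 1 q) hS.extClass z e).trans (LinearMap.congr_fun hz _))
  obtain ⟨y, rfl⟩ := exists_map_eq_of_post_extClass_eq_zero hS rfl z hδ
  rw [Subsingleton.elim y 0, map_zero]

lemma pairing_surjective_of_succ (h : p + (q + 1) = d) (h' : p + 1 + q = d)
    (h₁ : Function.Surjective (pairing I h' Y S.X₁))
    (h₂ : Function.Injective (pairing I h' Y S.X₂)) (h₃ : Subsingleton (Ext S.X₂ Y (q + 1))) :
    Function.Surjective (pairing I h Y S.X₃) := by
  intro φ
  obtain ⟨x, hx⟩ := h₁ (φ ∘ₗ hS.extClass.precompOfLinear A Y (add_comm 1 q))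
  have hx0 : map I (p + 1) S.f x = 0 := (injective_iff_map_eq_zero _).1 h₂ _
    (LinearMap.ext fun e ↦ by
      rw [pairing_map, hx]
      exact (congrArg φ (hS.extClass_comp_assoc e (h := add_comm 1 q))).trans (map_zero φ))
  obtain ⟨z, rfl⟩ := exists_post_extClass_eq_of_map_eq_zero hS rfl x hx0
  refine ⟨z, LinearMap.ext fun e ↦ ?_⟩
  obtain ⟨e', rfl⟩ := Ext.contravariant_sequence_exact₃ hS _ e
    (Subsingleton.elim _ _) (add_comm 1 q)
  exact (pairing_post h rfl h' (add_comm 1 q) hS.extClass z e').symm.trans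
    (LinearMap.congr_fun hx e')

end ShortExact

section Duality

variable [IsNoetherianRing A] (hB : Module.Baer A (LocCoh I d (ModuleCat.of A A)))
  (hgt : ∀ (K : ModuleCat.{u} A) [Module.Finite A K], Subsingleton (LocCoh I (d + 1) K))
include hB hgt

lemma pairing_zero_bijective (h : d + 0 = d) (M : ModuleCat.{u} A) [Module.Finite A M] :
    Function.Bijective (pairing I h (ModuleCat.of A A) M) := by
  have hsurj (M : ModuleCat.{u} A) [Module.Finite A M] :
      Function.Surjective (pairing I h (ModuleCat.of A A) M) := by
    obtain ⟨n, g, hg⟩ := Module.Finite.exists_fin' A M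
    exact pairing_surjective_of_baer (LinearMap.shortExact_shortComplexKer hg) hB h
      (pairing_free_surjective n h)
  obtain ⟨n, g, hg⟩ := Module.Finite.exists_fin' A M
  have : Module.Finite A (LinearMap.ker g) := inferInstance
  exact ⟨pairing_injective_of_baer (LinearMap.shortExact_shortComplexKer hg) hB h
    (hsurj (ModuleCat.of A (LinearMap.ker g))) (pairing_free_injective n h)
    (hgt (ModuleCat.of A (LinearMap.ker g))), hsurj M⟩

theorem pairing_bijective (hlt : ∀ i < d, Subsingleton (LocCoh I i (ModuleCat.of A A)))
    (h : p + q = d) (M : ModuleCat.{u} A) [Module.Finite A M] :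
    Function.Bijective (pairing I h (ModuleCat.of A A) M) := by
  induction q generalizing p M with
  | zero =>
    obtain rfl : p = d := (add_zero p).symm.trans h
    exact pairing_zero_bijective hB hgt h M
  | succ q ih =>
    have h' : p + 1 + q = d := by lia
    have := hlt p (by lia)
    obtain ⟨n, g, hg⟩ := Module.Finite.exists_fin' A M
    have hS := LinearMap.shortExact_shortComplexKer hg
    have hker := ih h' (ModuleCat.of A (LinearMap.ker g))
    exact ⟨pairing_injective_of_succ hS h h' hker.1 (subsingleton_free n),
      pairing_surjective_of_succ hS h h' hker.2 (ih h' (ModuleCat.of A (Fin n → A))).1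
        (subsingleton_of_forall_eq 0 Ext.eq_zero_of_projective)⟩

end Duality

end LocCoh

/-- Local duality: let `A` be a regular local Noetherian ring of dimension `d` with
maximal ideal `m` (regularity being expressed by the condition that `m` is generated by
`d = dim A` elements).  Then for every finitely generated `A`-module `M` and every
`p` with `p + q = d`, there is an isomorphism
`H^p_m(M) ≅ Hom_A(Ext^{d-p}_A(M, A), H^d_m(A))`. -/
theorem local_duality (A : Type u) [CommRing A] [IsNoetherianRing A] [IsLocalRing A]
    (d : ℕ) (hdim : ringKrullDim A = d)
    (hreg : ∃ s : Finset A, s.card = d ∧ Ideal.span (s : Set A) = maximalIdeal A)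
    (M : Type u) [AddCommGroup M] [Module A M] [Module.Finite A M]
    (p q : ℕ) (hpq : p + q = d) :
    Nonempty ((((localCohomology (maximalIdeal A) p).obj (ModuleCat.of A M))) ≃ₗ[A]
      ((((Ext A (ModuleCat.{u} A) q).obj (op (ModuleCat.of A M))).obj (ModuleCat.of A A))
        →ₗ[A] ((localCohomology (maximalIdeal A) d).obj (ModuleCat.of A A)))) := by
  obtain ⟨s, hs, hspan⟩ := hreg
  have : IsRegularLocalRing A := .of_spanFinrank_maximalIdeal_le A <| by
    rw [← hspan, hdim, ← hs, ← Set.ncard_coe_finset s]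
    exact_mod_cast Submodule.spanFinrank_span_le_ncard_of_finite s.finite_toSet
  have hlt (i : ℕ) (hi : i < d) : TorsionExtVanishes (maximalIdeal A) (ModuleCat.of A A) i :=
    torsionExtVanishes_maximalIdeal_of_lt hdim hi
  have hgt (Y : ModuleCat.{u} A) : TorsionExtVanishes (maximalIdeal A) Y (d + 1) :=
    torsionExtVanishes_maximalIdeal_succ hdim Y
  have hpair := LocCoh.pairing_bijective (LocCoh.baer (fun i hi ↦ hlt i (by lia)) (hgt _))
    (fun K _ ↦ LocCoh.subsingleton_of_torsionExtVanishes (hgt K))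
    (fun i hi ↦ LocCoh.subsingleton_of_torsionExtVanishes (hlt i hi)) hpq (ModuleCat.of A M)
  exact ⟨LinearEquiv.ofBijective _ hpair ≪≫ₗ LinearEquiv.arrowCongr
    (extIso A (ModuleCat.of A M) (ModuleCat.of A A) q).toLinearEquiv.symm (LinearEquiv.refl A _)⟩
end

section
/- In a local Cohen-Macaulay ring, any two maximal chains of prime ideals have the same length; in particular every maximal chain of primes ending at the maximal ideal has length equal to dim A. -/
universe u

/-- A (local) ring `A` is Cohen-Macaulay if it admits a regular sequence of non-units
whose length equals `dim A`, i.e. `depth A = dim A`. -/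
def IsCohenMacaulayLocalRing (A : Type u) [CommRing A] : Prop :=
  ∃ rs : List A, (∀ a ∈ rs, ¬ IsUnit a) ∧ RingTheory.Sequence.IsRegular A rs ∧
    (rs.length : WithBot ℕ∞) = ringKrullDim A

/-- A chain of prime ideals `P_0 < P_1 < ⋯ < P_l` is maximal if `P_0` is a minimal prime
(no prime lies strictly below it), `P_l` is the maximal ideal, and no prime lies strictly
between two consecutive members of the chain. -/
def IsMaximalPrimeChain (A : Type u) [CommRing A] [IsLocalRing A]
    (c : LTSeries (PrimeSpectrum A)) : Prop :=
  (∀ q : PrimeSpectrum A, ¬ q < c.head) ∧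
    c.last.asIdeal = IsLocalRing.maximalIdeal A ∧
    ∀ i : Fin c.length, ∀ q : PrimeSpectrum A,
      ¬ (c.toFun i.castSucc < q ∧ q < c.toFun i.succ)

/-!
If `P` is an associated prime of a Cohen-Macaulay module `M` of dimension `n`, then
`n ≤ depth M ≤ dim A / P ≤ dim M ≤ n`, so all associated primes of `M` have the same coheight and
none lies strictly below another. By prime avoidance, a prime `Q` covering `P` therefore contains
an `M`-regular element `x`. Then `Q` is an associated prime of `M / xM`, which is Cohen-Macaulay of
dimension `n - 1`. So each step up a saturated chain that starts at an associated prime of `M`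
lowers the dimension by exactly one, until the maximal ideal is reached in dimension `0`.
-/

open CategoryTheory Abelian IsLocalRing

section AssociatedPrimes

variable {A : Type*} [CommRing A] {M : Type*} [AddCommGroup M] [Module A M]

theorem notMem_of_mem_associatedPrimes [IsNoetherianRing A] {x : A} (hx : IsSMulRegular M x)
    {P : Ideal A} (hP : P ∈ associatedPrimes A M) : x ∉ P := by
  intro hxP
  have hzero : x ∈ ⋃ p ∈ associatedPrimes A M, (p : Set A) := Set.mem_biUnion hP hxP
  rw [biUnion_associatedPrimes_eq_compl_regular] at hzero
  exact hzero hx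

theorem exists_isSMulRegular_of_forall_associatedPrimes_not_le [IsNoetherianRing A]
    [Module.Finite A M] {I : Ideal A} (hI : ∀ p ∈ associatedPrimes A M, ¬ I ≤ p) :
    ∃ x ∈ I, IsSMulRegular M x := by
  by_contra! hreg
  have hsub : (I : Set A) ⊆ ⋃ p ∈ associatedPrimes A M, (p : Set A) := by
    rw [biUnion_associatedPrimes_eq_compl_regular]
    exact hreg
  obtain ⟨p, hp, hle⟩ := (Ideal.subset_union_prime_finite (associatedPrimes.finite A M)
    (f := id) 0 0 fun _ hp _ _ ↦ hp.isPrime).mp hsub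
  exact hI p hp hle

theorem mem_support_of_mem_associatedPrimes [Module.Finite A M] {P : PrimeSpectrum A}
    (hP : P.asIdeal ∈ associatedPrimes A M) : P ∈ Module.support A M :=
  Module.mem_support_iff_of_finite.mpr <|
    Submodule.annihilator_top.symm.trans_le (IsAssociatedPrime.annihilator_le hP)

theorem mem_associatedPrimes_of_isMin [IsNoetherianRing A] {P : PrimeSpectrum A} (hP : IsMin P) :
    P.asIdeal ∈ associatedPrimes A A := by
  refine Module.associatedPrimes.minimalPrimes_annihilator_subset_associatedPrimes A A ?_
  rw [Module.annihilator_eq_bot.mpr inferInstance]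
  exact PrimeSpectrum.isMin_iff.mp hP

theorem annihilator_torsionBySet_of_mem_associatedPrimes [IsNoetherianRing A] {P : Ideal A}
    (hP : P ∈ associatedPrimes A M) :
    Module.annihilator A (Submodule.torsionBySet A M P) = P := by
  obtain ⟨-, y, hy⟩ := isAssociatedPrime_iff.mp hP
  have mem_P (a : A) : a ∈ P ↔ a • y = 0 := by
    rw [hy, Submodule.mem_colon_singleton, Submodule.mem_bot]
  have hyP : y ∈ Submodule.torsionBySet A M P :=
    (Submodule.mem_torsionBySet_iff _ _).mpr fun a ↦ (mem_P a).mp a.2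
  ext a
  rw [Module.mem_annihilator]
  exact ⟨fun ha ↦ (mem_P a).mpr (congrArg Subtype.val (ha ⟨y, hyP⟩)),
    fun ha m ↦ Subtype.ext ((Submodule.mem_torsionBySet_iff _ _).mp m.2 ⟨a, ha⟩)⟩

theorem isSMulRegular_quotient_torsionBySet {x : A} (hx : IsSMulRegular M x) (s : Set A) :
    IsSMulRegular (M ⧸ Submodule.torsionBySet A M s) x := by
  refine (isSMulRegular_quotient_iff_mem_of_smul_mem _ _).mpr fun m hm ↦ ?_
  rw [Submodule.mem_torsionBySet_iff] at hm ⊢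
  intro a
  apply hx
  simpa only [smul_zero, smul_comm x] using hm a

theorem injective_quotSMulTop_map_subtype {x : A} {N : Submodule A M}
    (hx : IsSMulRegular (M ⧸ N) x) : Function.Injective (QuotSMulTop.map x N.subtype) := by
  have hexact := QuotSMulTop.map_first_exact_on_four_term_exact_of_isSMulRegular_last
    (f₁ := (0 : PUnit →ₗ[A] N)) (f₂ := N.subtype) (f₃ := N.mkQ)
    ((LinearMap.exact_zero_iff_injective _ _).mpr N.injective_subtype)
    (LinearMap.exact_subtype_mkQ N) hx
  rw [map_zero] at hexact
  exact (LinearMap.exact_zero_iff_injective _ _).mp hexact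

theorem minimalPrimes_annihilator_quotSMulTop [Module.Finite A M] (x : A) :
    (Module.annihilator A (QuotSMulTop x M)).minimalPrimes =
      (Module.annihilator A M ⊔ Ideal.span {x}).minimalPrimes := by
  have hrad : (Module.annihilator A (QuotSMulTop x M)).radical =
      (Module.annihilator A M ⊔ Ideal.span {x}).radical := by
    rw [← PrimeSpectrum.zeroLocus_eq_iff, ← Module.support_eq_zeroLocus,
      Module.support_quotSMulTop, Module.support_eq_zeroLocus, PrimeSpectrum.zeroLocus_sup,
      PrimeSpectrum.zeroLocus_span]
  rw [← Ideal.radical_minimalPrimes, hrad, Ideal.radical_minimalPrimes]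

theorem mem_associatedPrimes_quotSMulTop [IsNoetherianRing A] [Module.Finite A M] {x : A}
    (hx : IsSMulRegular M x) {P Q : Ideal A} (hP : P ∈ associatedPrimes A M)
    (hQ : Q ∈ (P ⊔ Ideal.span {x}).minimalPrimes) :
    Q ∈ associatedPrimes A (QuotSMulTop x M) := by
  -- `N` has annihilator `P` because `P` is associated to `M`, and `N / xN` embeds into `M / xM`.
  let N := Submodule.torsionBySet A M P
  have hinj : Function.Injective (QuotSMulTop.map x N.subtype) :=
    injective_quotSMulTop_map_subtype (isSMulRegular_quotient_torsionBySet hx P)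
  refine associatedPrimes.subset_of_injective hinj
    (Module.associatedPrimes.minimalPrimes_annihilator_subset_associatedPrimes A _ ?_)
  rwa [minimalPrimes_annihilator_quotSMulTop, annihilator_torsionBySet_of_mem_associatedPrimes hP]

end AssociatedPrimes

section PrimeSpectrum

variable {A : Type*} [CommRing A]

theorem lt_of_sup_span_singleton_le {P Q : PrimeSpectrum A} {x : A} (hxP : x ∉ P.asIdeal)
    (hQ : P.asIdeal ⊔ Ideal.span {x} ≤ Q.asIdeal) : P < Q := by
  refine lt_of_le_of_ne (le_sup_left.trans hQ) ?_
  rintro rfl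
  exact hxP (hQ (Ideal.mem_sup_right (Ideal.mem_span_singleton_self x)))

theorem mem_minimalPrimes_sup_span_singleton_of_covBy {P Q : PrimeSpectrum A} (hPQ : P ⋖ Q) {x : A}
    (hxP : x ∉ P.asIdeal) (hxQ : x ∈ Q.asIdeal) :
    Q.asIdeal ∈ (P.asIdeal ⊔ Ideal.span {x}).minimalPrimes := by
  refine ⟨⟨Q.2, sup_le hPQ.le ((Ideal.span_singleton_le_iff_mem _).mpr hxQ)⟩, ?_⟩
  rintro R ⟨hR, hle⟩ hRQ
  have hPR : P < ⟨R, hR⟩ := lt_of_sup_span_singleton_le hxP hle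
  by_contra hQR
  exact hPQ.2 hPR (lt_of_le_not_ge (b := Q) hRQ hQR)

theorem coheight_le_supportDim {M : Type*} [AddCommGroup M] [Module A M] {P : PrimeSpectrum A}
    (hP : P ∈ Module.support A M) : (Order.coheight P : WithBot ℕ∞) ≤ Module.supportDim A M := by
  rw [Order.coheight_eq_krullDim_Ici]
  exact Order.krullDim_le_of_strictMono
    (fun Q : Set.Ici P ↦ (⟨Q.1, Module.mem_support_mono Q.2 hP⟩ : Module.support A M))
    fun _ _ h ↦ h

end PrimeSpectrum

theorem subsingleton_ext_quotSMulTop {A : Type u} [CommRing A] {N : ModuleCat.{u} A}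
    {M : Type u} [AddCommGroup M] [Module A M] {x : A} (hx : IsSMulRegular M x) {i : ℕ}
    (h₀ : Subsingleton (Ext N (ModuleCat.of A M) i))
    (h₁ : Subsingleton (Ext N (ModuleCat.of A M) (i + 1))) :
    Subsingleton (Ext N (ModuleCat.of A (QuotSMulTop x M)) i) := by
  have hx' : IsSMulRegular (ModuleCat.of A M) x := hx
  have hexact := Ext.covariant_sequence_exact₃' N hx'.smulShortComplex_shortExact i (i + 1) rfl
  exact AddCommGrpCat.subsingleton_of_isZero <| hexact.isZero_of_both_zeros
    ((AddCommGrpCat.isZero_of_iff_subsingleton.mpr h₀).eq_zero_of_src _)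
    ((AddCommGrpCat.isZero_of_iff_subsingleton.mpr h₁).eq_zero_of_tgt _)

section IsLocalRing

variable {A : Type u} [CommRing A] [IsLocalRing A] {M : Type u} [AddCommGroup M] [Module A M]
  {n : ℕ}

variable (A M n) in
/-- The inequality `n ≤ depth M` for a module `M` over a local ring with residue field `k`, encoded
(as Rees' theorem allows) by `Extⁱ(k, M) = 0` for `i < n`. Unlike the existence of an `M`-regular
sequence of length `n`, this form passes to `M / xM` for an arbitrary `M`-regular element `x`. -/
def LEDepth : Prop :=
  ∀ i < n, Subsingleton (Ext (ModuleCat.of A (A ⧸ maximalIdeal A)) (ModuleCat.of A M) i)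

namespace LEDepth

theorem quotSMulTop (h : LEDepth A M (n + 1)) {x : A} (hx : IsSMulRegular M x) :
    LEDepth A (QuotSMulTop x M) n :=
  fun i hi ↦ subsingleton_ext_quotSMulTop hx (h i (by lia)) (h (i + 1) (by lia))

variable [IsNoetherianRing A] [Module.Finite A M]

theorem of_isRegular {rs : List A} (hreg : RingTheory.Sequence.IsRegular M rs) :
    LEDepth A M rs.length := by
  have := hreg.nontrivial
  have hrs : ∀ a ∈ rs, a ∈ maximalIdeal A := fun a ha ↦ by
    by_contra ha'
    have htop : Ideal.ofList rs = ⊤ :=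
      Ideal.eq_top_of_isUnit_mem _ (Ideal.subset_span ha) (notMem_maximalIdeal.mp ha')
    exact hreg.top_ne_smul (by rw [htop, Submodule.top_smul])
  refine ModuleCat.subsingleton_ext_of_exists_isRegular (maximalIdeal A)
    (ModuleCat.of A (A ⧸ maximalIdeal A)) ?_ (ModuleCat.of A M) ?_ rs hrs hreg
  · rw [Module.support_eq_zeroLocus, Ideal.annihilator_quotient]
  · exact (Submodule.top_ne_ideal_smul_of_le_jacobson_annihilator
      (maximalIdeal_le_jacobson _)).symm.lt_top

theorem exists_isSMulRegular (h : LEDepth A M (n + 1)) :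
    ∃ x ∈ maximalIdeal A, IsSMulRegular M x := by
  have : Subsingleton ((A ⧸ maximalIdeal A) →ₗ[A] M) :=
    (Ext.addEquiv₀.trans ModuleCat.homAddEquiv).subsingleton_congr.mp (h 0 n.succ_pos)
  simpa only [Ideal.annihilator_quotient] using IsSMulRegular.subsingleton_linearMap_iff.mp this

theorem le_coheight (h : LEDepth A M n) {P : PrimeSpectrum A}
    (hP : P.asIdeal ∈ associatedPrimes A M) : (n : ℕ∞) ≤ Order.coheight P := by
  induction n generalizing M P with
  | zero => simp
  | succ n ih =>
    obtain ⟨x, hxm, hx⟩ := h.exists_isSMulRegular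
    have hle : P.asIdeal ⊔ Ideal.span {x} ≤ maximalIdeal A :=
      sup_le (le_maximalIdeal P.2.ne_top) ((Ideal.span_singleton_le_iff_mem _).mpr hxm)
    obtain ⟨Q, hQ, -⟩ := Ideal.exists_minimalPrimes_le hle
    have hPQ : P < ⟨Q, hQ.1.1⟩ :=
      lt_of_sup_span_singleton_le (notMem_of_mem_associatedPrimes hx hP) hQ.1.2
    calc ((n + 1 : ℕ) : ℕ∞) = n + 1 := by push_cast; rfl
      _ ≤ Order.coheight (⟨Q, hQ.1.1⟩ : PrimeSpectrum A) + 1 := by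
        gcongr
        exact ih (h.quotSMulTop hx) (mem_associatedPrimes_quotSMulTop hx hP hQ)
      _ ≤ Order.coheight P := Order.coheight_add_one_le hPQ

end LEDepth

variable (A M n) in
/-- A module `M` over a local ring is Cohen-Macaulay of dimension `n` if `n ≤ depth M` and the
Krull dimension of its support is `n`; this excludes the zero module. For finite `M` over a
Noetherian ring the depth is then exactly `n`. -/
structure IsCohenMacaulayOfDim : Prop where
  le_depth : LEDepth A M n
  supportDim_eq : Module.supportDim A M = n

namespace IsCohenMacaulayOfDim

variable [IsNoetherianRing A] [Module.Finite A M]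

theorem quotSMulTop (h : IsCohenMacaulayOfDim A M (n + 1)) {x : A} (hxm : x ∈ maximalIdeal A)
    (hx : IsSMulRegular M x) : IsCohenMacaulayOfDim A (QuotSMulTop x M) n where
  le_depth := h.le_depth.quotSMulTop hx
  supportDim_eq := by
    have hdim := Module.supportDim_quotSMulTop_succ_eq_supportDim hx hxm
    rw [h.supportDim_eq, Nat.cast_succ] at hdim
    exact ENat.WithBot.add_one_cancel.mp hdim

theorem coheight_eq (h : IsCohenMacaulayOfDim A M n) {P : PrimeSpectrum A}
    (hP : P.asIdeal ∈ associatedPrimes A M) : Order.coheight P = n := by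
  refine le_antisymm ?_ (h.le_depth.le_coheight hP)
  have hle := coheight_le_supportDim (mem_support_of_mem_associatedPrimes hP)
  rw [h.supportDim_eq] at hle
  exact_mod_cast hle

theorem exists_isSMulRegular_of_lt (h : IsCohenMacaulayOfDim A M n) {P Q : PrimeSpectrum A}
    (hP : P.asIdeal ∈ associatedPrimes A M) (hPQ : P < Q) :
    ∃ x ∈ Q.asIdeal, IsSMulRegular M x := by
  refine exists_isSMulRegular_of_forall_associatedPrimes_not_le fun p hp hQp ↦ ?_
  have hPp : P < ⟨p, hp.isPrime⟩ := hPQ.trans_le hQp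
  have hcoheight := Order.coheight_add_one_le hPp
  rw [h.coheight_eq hP, h.coheight_eq (P := ⟨p, hp.isPrime⟩) hp] at hcoheight
  norm_cast at hcoheight
  lia

theorem coheight_last_add_length (h : IsCohenMacaulayOfDim A M n)
    (c : RelSeries {(P, Q) : PrimeSpectrum A × PrimeSpectrum A | P ⋖ Q})
    (hc : c.head.asIdeal ∈ associatedPrimes A M) :
    Order.coheight c.last + c.length = n := by
  induction c using RelSeries.inductionOn generalizing M n with
  | singleton P => simpa using h.coheight_eq hc
  | cons c P hcov ih =>
    replace hcov : P ⋖ c.head := hcov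
    rw [RelSeries.head_cons] at hc
    obtain ⟨x, hxQ, hx⟩ := h.exists_isSMulRegular_of_lt hc hcov.lt
    have hxP : x ∉ P.asIdeal := notMem_of_mem_associatedPrimes hx hc
    have hass : c.head.asIdeal ∈ associatedPrimes A (QuotSMulTop x M) :=
      mem_associatedPrimes_quotSMulTop hx hc
        (mem_minimalPrimes_sup_span_singleton_of_covBy hcov hxP hxQ)
    obtain _ | n := n
    · have hmax : IsMax P := Order.coheight_eq_zero.mp (h.coheight_eq hc)
      exact absurd hcov.lt hmax.not_lt
    · have hdim := ih (h.quotSMulTop (le_maximalIdeal c.head.2.ne_top hxQ) hx) hass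
      rw [RelSeries.last_cons, RelSeries.cons_length]
      push_cast
      rw [← add_assoc, hdim]

end IsCohenMacaulayOfDim

variable [IsNoetherianRing A]

theorem IsCohenMacaulayLocalRing.exists_isCohenMacaulayOfDim (hA : IsCohenMacaulayLocalRing A) :
    ∃ n : ℕ, IsCohenMacaulayOfDim A A n := by
  obtain ⟨rs, -, hreg, hdim⟩ := hA
  exact ⟨rs.length, .of_isRegular hreg, by rw [Module.supportDim_self_eq_ringKrullDim, hdim]⟩

theorem IsMaximalPrimeChain.length_eq_ringKrullDim {c : LTSeries (PrimeSpectrum A)}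
    (hc : IsMaximalPrimeChain A c) (hA : IsCohenMacaulayLocalRing A) :
    (c.length : WithBot ℕ∞) = ringKrullDim A := by
  obtain ⟨n, hn⟩ := hA.exists_isCohenMacaulayOfDim
  obtain ⟨hhead, hlast, hcov⟩ := hc
  have hass : c.head.asIdeal ∈ associatedPrimes A A :=
    mem_associatedPrimes_of_isMin (isMin_iff_forall_not_lt.mpr hhead)
  have hsum : Order.coheight c.last + c.length = n := hn.coheight_last_add_length
    ⟨c.length, c.toFun, fun i ↦ ⟨c.step i, fun q hq hq' ↦ hcov i q ⟨hq, hq'⟩⟩⟩ hass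
  have hmax : IsMax c.last := by
    rw [PrimeSpectrum.isMax_iff, hlast]
    exact maximalIdeal.isMaximal A
  rw [Order.coheight_eq_zero.mpr hmax, zero_add] at hsum
  rw [← Module.supportDim_self_eq_ringKrullDim, hn.supportDim_eq]
  exact_mod_cast hsum

end IsLocalRing

/-- In a local Cohen-Macaulay ring, any two maximal chains of prime ideals have the same
length; in particular every maximal chain of primes (which necessarily ends at the
maximal ideal) has length equal to `dim A`. -/
theorem maximalPrimeChains_same_length (A : Type u) [CommRing A] [IsNoetherianRing A]
    [IsLocalRing A] (hCM : IsCohenMacaulayLocalRing A) :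
    (∀ c₁ c₂ : LTSeries (PrimeSpectrum A),
      IsMaximalPrimeChain A c₁ → IsMaximalPrimeChain A c₂ → c₁.length = c₂.length) ∧
    (∀ c : LTSeries (PrimeSpectrum A), IsMaximalPrimeChain A c →
      (c.length : WithBot ℕ∞) = ringKrullDim A) := by
  have hdim (c : LTSeries (PrimeSpectrum A)) (hc : IsMaximalPrimeChain A c) :
      (c.length : WithBot ℕ∞) = ringKrullDim A := hc.length_eq_ringKrullDim hCM
  refine ⟨fun c₁ c₂ h₁ h₂ ↦ ?_, hdim⟩
  exact_mod_cast (hdim c₁ h₁).trans (hdim c₂ h₂).symm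
end
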